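/- arXiv:2502.05974 — 3 statements merged into one kernel-verified Lean document; each statement's English description precedes it below -/
import Mathlib

section
/- For every η > 0, max_{ρ∈Δ(Φ)} max_{ν∈Δ(Ψ)} min_{p∈Δ(Π)} AIR^Φ_{ρ,η}(p,ν) = DEC^KL_η(𝓜, Φ). -/
open scoped BigOperators

noncomputable section

/-- A probability distribution on a finite type, represented as a nonnegative
function summing to one. -/
structure FDist (X : Type*) [Fintype X] where
  p : X → ℝ
  nonneg : ∀ x, 0 ≤ p x
  sum_one : ∑ x, p x = 1

/-- Kullback–Leibler divergence between two (finitely supported) distributions,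
valued in `EReal`; it is `⊤` when `p` is not absolutely continuous w.r.t. `q`. -/
def KL {X : Type*} [Fintype X] (p q : X → ℝ) : EReal :=
  haveI := Classical.propDecidable (∀ x, q x = 0 → p x = 0)
  if ∀ x, q x = 0 → p x = 0 then ((∑ x, p x * Real.log (p x / q x) : ℝ) : EReal)
  else (⊤ : EReal)

section GeneralDM

variable {Pol Obs Mod I : Type*}
variable [Fintype Pol] [Fintype Obs] [Fintype Mod] [Fintype I] [DecidableEq I]

/-- Posterior distribution over the partition cells `I` given prior `ν` on `Mod × Pol`,
after playing `π` and observing `o`. -/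
def post (q : Mod → Pol → Obs → ℝ) (part : Mod × Pol → Option I)
    (ν : Mod × Pol → ℝ) (π : Pol) (o : Obs) : I → ℝ := fun i =>
  (∑ mp : Mod × Pol, if part mp = some i then ν mp * q mp.1 π o else 0) /
    (∑ mp : Mod × Pol, ν mp * q mp.1 π o)

/-- `AIR^Φ_{ρ,η}(p,ν)`. -/
def AIR (q : Mod → Pol → Obs → ℝ) (V : Mod → Pol → ℝ) (part : Mod × Pol → Option I)
    (η : ℝ) (ρ : I → ℝ) (p : Pol → ℝ) (ν : Mod × Pol → ℝ) : EReal :=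
  ((∑ π : Pol, ∑ mp : Mod × Pol, p π * ν mp * (V mp.1 mp.2 - V mp.1 π) : ℝ) : EReal)
    - ((η⁻¹ : ℝ) : EReal) *
        ∑ π : Pol, ∑ mp : Mod × Pol, ∑ o : Obs,
          ((p π * ν mp * q mp.1 π o : ℝ) : EReal) * KL (post q part ν π o) ρ

/-- `max_{ρ∈Δ(Φ)} max_{ν∈Δ(Ψ)} min_{p∈Δ(Π)} AIR^Φ_{ρ,η}(p,ν)`. -/
def AIRmaxmin (q : Mod → Pol → Obs → ℝ) (V : Mod → Pol → ℝ)
    (part : Mod × Pol → Option I) (η : ℝ) : EReal :=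
  ⨆ ρ : FDist I, ⨆ ν : {ν : FDist (Mod × Pol) // ∀ mp, part mp = none → ν.p mp = 0},
    ⨅ p : FDist Pol, AIR q V part η ρ.p p.p ν.1.p

/-- Observation distribution of the mixture model `M^μ`. -/
def mixObs (q : Mod → Pol → Obs → ℝ) (μ : Mod → ℝ) (π : Pol) : Obs → ℝ := fun o =>
  ∑ m : Mod, μ m * q m π o

/-- Observation distribution of the mixture of the model-marginal of `ν ∈ Δ(𝓜 × Π)`. -/
def pairMixObs (q : Mod → Pol → Obs → ℝ) (ν : Mod × Pol → ℝ) (π : Pol) : Obs → ℝ := fun o =>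
  ∑ mp : Mod × Pol, ν mp * q mp.1 π o

/-- The `Φ`-dependent DEC, `DEC^KL_η(𝓜, Φ)`. -/
def DECPhi (q : Mod → Pol → Obs → ℝ) (V : Mod → Pol → ℝ)
    (part : Mod × Pol → Option I) (η : ℝ) : EReal :=
  ⨆ μbar : FDist Mod, ⨅ p : FDist Pol, ⨆ i : I,
    ⨆ ν : {ν : FDist (Mod × Pol) // ∀ mp, ν.p mp ≠ 0 → part mp = some i},
      ((∑ π : Pol, p.p π *
          ((∑ mp : Mod × Pol, ν.1.p mp * V mp.1 mp.2)
            - (∑ mp : Mod × Pol, ν.1.p mp * V mp.1 π)) : ℝ) : EReal)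
        - ((η⁻¹ : ℝ) : EReal) *
            ∑ π : Pol, ((p.p π : ℝ) : EReal) * KL (pairMixObs q ν.1.p π) (mixObs q μbar.p π)

/-- `C(Φ) = max_{φ∈Φ} max_{ν∈Δ(φ)} (E_{(M,π⋆)∼ν}[V_M(π⋆)] − max_π V_{M^ν}(π))`. -/
def CPhi (V : Mod → Pol → ℝ) (part : Mod × Pol → Option I) : ℝ :=
  ⨆ i : I, ⨆ ν : {ν : FDist (Mod × Pol) // ∀ mp, ν.p mp ≠ 0 → part mp = some i},
    ((∑ mp : Mod × Pol, ν.1.p mp * V mp.1 mp.2)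
      - ⨆ π : Pol, ∑ mp : Mod × Pol, ν.1.p mp * V mp.1 π)

/-- `DEC^KL_η(𝓜̄(Φ))`: the DEC of the `Φ`-aware convexification
`𝓜̄(Φ) = ⋃_{φ∈Φ} co({M : (M,π) ∈ φ for some π})`. -/
def DECbar (q : Mod → Pol → Obs → ℝ) (V : Mod → Pol → ℝ)
    (part : Mod × Pol → Option I) (η : ℝ) : EReal :=
  ⨆ μbar : {μ : FDist Mod // ∀ m, μ.p m ≠ 0 → ∃ i : I, ∃ π : Pol, part (m, π) = some i},
    ⨅ p : FDist Pol, ⨆ i : I,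
      ⨆ μ : {μ : FDist Mod // ∀ m, μ.p m ≠ 0 → ∃ π : Pol, part (m, π) = some i},
        ((∑ π : Pol, p.p π *
            ((⨆ π' : Pol, ∑ m : Mod, μ.1.p m * V m π') - ∑ m : Mod, μ.1.p m * V m π) : ℝ) : EReal)
          - ((η⁻¹ : ℝ) : EReal) *
              ∑ π : Pol, ((p.p π : ℝ) : EReal) * KL (mixObs q μ.1.p π) (mixObs q μbar.1.p π)

/-- `DEC^KL_η(𝓜)` for the class of pure models. -/
def DECpure (q : Mod → Pol → Obs → ℝ) (V : Mod → Pol → ℝ) (η : ℝ) : EReal :=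
  ⨆ μbar : FDist Mod, ⨅ p : FDist Pol, ⨆ m : Mod,
    ((∑ π : Pol, p.p π * ((⨆ π' : Pol, V m π') - V m π) : ℝ) : EReal)
      - ((η⁻¹ : ℝ) : EReal) * ∑ π : Pol, ((p.p π : ℝ) : EReal) * KL (q m π) (mixObs q μbar.p π)

/-- `DEC^KL_η(𝓜̄(Θ))` for a total partition `Θ` of the models. -/
def DECbarTheta (q : Mod → Pol → Obs → ℝ) (V : Mod → Pol → ℝ)
    (partM : Mod → I) (η : ℝ) : EReal :=
  ⨆ μbar : FDist Mod, ⨅ p : FDist Pol, ⨆ i : I,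
    ⨆ μ : {μ : FDist Mod // ∀ m, μ.p m ≠ 0 → partM m = i},
      ((∑ π : Pol, p.p π *
          ((⨆ π' : Pol, ∑ m : Mod, μ.1.p m * V m π') - ∑ m : Mod, μ.1.p m * V m π) : ℝ) : EReal)
        - ((η⁻¹ : ℝ) : EReal) *
            ∑ π : Pol, ((p.p π : ℝ) : EReal) * KL (mixObs q μ.1.p π) (mixObs q μbar.p π)

/-- Posterior over a model partition `Θ` given prior `ν` on models. -/
def postM (q : Mod → Pol → Obs → ℝ) (partM : Mod → I) (ν : Mod → ℝ)
    (π : Pol) (o : Obs) : I → ℝ := fun i =>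
  (∑ m : Mod, if partM m = i then ν m * q m π o else 0) / (∑ m : Mod, ν m * q m π o)

/-- `InfoAIR^Θ_{ρ,η}(p, ν, π^Θ)`. -/
def InfoAIR (q : Mod → Pol → Obs → ℝ) (V : Mod → Pol → ℝ) (partM : Mod → I)
    (η : ℝ) (ρ : I → ℝ) (p : Pol → ℝ) (ν : Mod → ℝ) (πΘ : I → Pol) : EReal :=
  ((∑ π : Pol, ∑ m : Mod, p π * ν m * (V m (πΘ (partM m)) - V m π) : ℝ) : EReal)
    - ((η⁻¹ : ℝ) : EReal) *
        ∑ π : Pol, ∑ m : Mod, ∑ o : Obs,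
          ((p π * ν m * q m π o : ℝ) : EReal) * KL (postM q partM ν π o) ρ

end GeneralDM

set_option linter.unusedSectionVars false

namespace AirProof

lemma minimax {Pol E : Type*} [Fintype Pol] [AddCommGroup E] [Module ℝ E]
    (T : Set E) (hT : T.Nonempty) (F : Pol → E → ℝ) (hF : ∀ π, ConcaveOn ℝ T (F π)) (hTc : Convex ℝ T)
    (c : ℝ) (h : ∀ ν ∈ T, ∃ π, F π ν ≤ c) :
    ∃ p : FDist Pol, ∀ ν ∈ T, ∑ π, p.p π * F π ν ≤ c := by
  classical
  set C : Set (Pol → ℝ) := ⋃ ν ∈ T, Set.pi Set.univ (fun π => Set.Iio (F π ν)) with hC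
  have memC : ∀ x, x ∈ C ↔ ∃ ν ∈ T, ∀ π, x π < F π ν := by
    intro x; simp [hC]
  have hopen : IsOpen C :=
    isOpen_biUnion fun ν _ => isOpen_set_pi Set.finite_univ fun _ _ => isOpen_Iio
  have hconv : Convex ℝ C := by
    intro x hx y hy s t hs ht hst
    rw [memC] at hx hy ⊢
    obtain ⟨ν, hν, h1⟩ := hx
    obtain ⟨μ, hμ, h2⟩ := hy
    refine ⟨s • ν + t • μ, hTc hν hμ hs ht hst, fun π => ?_⟩
    refine lt_of_lt_of_le ?_ ((hF π).2 hν hμ hs ht hst)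
    simp only [Pi.add_apply, Pi.smul_apply, smul_eq_mul]
    have := h1 π
    have := h2 π
    rcases hs.eq_or_lt with h0 | h0
    · have : t = 1 := by linarith
      subst this; subst h0; linarith
    · have : s * x π < s * F π ν := by gcongr
      have : t * y π ≤ t * F π μ := by gcongr
      linarith
  have hnot : (fun _ => c) ∉ C := by
    rw [memC]
    rintro ⟨ν, hν, h1⟩
    obtain ⟨π, h2⟩ := h ν hν
    exact absurd (h1 π) (not_lt.mpr h2)
  obtain ⟨f, hf⟩ := geometric_hahn_banach_open_point hconv hopen hnot
  set a : Pol → ℝ := fun π => f (Pi.single π 1) with ha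
  have hfa : ∀ x : Pol → ℝ, f x = ∑ π, a π * x π := by
    intro x
    have hx : x = ∑ π, x π • (Pi.single π 1 : Pol → ℝ) := by
      ext j; simp [Finset.sum_apply, Pi.single_apply]
    conv_lhs => rw [hx]
    rw [map_sum]
    refine Finset.sum_congr rfl fun π _ => ?_
    rw [map_smul, smul_eq_mul, mul_comm]
  obtain ⟨ν0, hν0⟩ := hT
  have hx0 : (fun π => F π ν0 - 1) ∈ C := by
    rw [memC]; exact ⟨ν0, hν0, fun π => by linarith⟩
  have ha0 : ∀ π, 0 ≤ a π := by
    intro π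
    by_contra hneg
    push Not at hneg
    set K := f (fun _ => c) - f (fun π => F π ν0 - 1) with hK
    have hKpos : 0 < K := sub_pos.mpr (hf _ hx0)
    have hmem : (fun j => F j ν0 - 1) + (-(K / (-a π))) • (Pi.single π 1 : Pol → ℝ) ∈ C := by
      rw [memC]
      refine ⟨ν0, hν0, fun j => ?_⟩
      have h1 : 0 < K / (-a π) := div_pos hKpos (by linarith)
      simp only [Pi.add_apply, Pi.smul_apply, smul_eq_mul, Pi.single_apply]
      split_ifs <;> nlinarith
    have := hf _ hmem
    rw [map_add, map_smul, smul_eq_mul] at this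
    change _ + -(K / (-a π)) * a π < _ at this
    have h2 : -(K / (-a π)) * a π = K := by
      have := hneg.ne
      field_simp
    rw [h2] at this
    linarith
  set S := ∑ π, a π with hS
  have hSpos : 0 < S := by
    refine lt_of_le_of_ne (Finset.sum_nonneg fun π _ => ha0 π) fun h0 => ?_
    have hz : ∀ π, a π = 0 := fun π =>
      (Finset.sum_eq_zero_iff_of_nonneg (fun π _ => ha0 π)).mp h0.symm π (Finset.mem_univ _)
    have := hf _ hx0
    rw [hfa, hfa] at this
    simp [hz] at this
  refine ⟨⟨fun π => a π / S, fun π => div_nonneg (ha0 π) hSpos.le, ?_⟩, fun ν hν => ?_⟩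
  · rw [← Finset.sum_div, div_self hSpos.ne']
  · refine le_of_forall_pos_le_add fun δ hδ => ?_
    have hmem : (fun π => F π ν - δ) ∈ C := by
      rw [memC]; exact ⟨ν, hν, fun π => by linarith⟩
    have := hf _ hmem
    rw [hfa, hfa] at this
    simp only [mul_sub, Finset.sum_sub_distrib, ← Finset.sum_mul] at this
    have h3 : ∑ π, a π / S * F π ν = (∑ π, a π * F π ν) / S := by
      rw [Finset.sum_div]; exact Finset.sum_congr rfl fun _ _ => by ring
    simp only [h3]
    rw [div_le_iff₀ hSpos]
    nlinarith

lemma key (a b t : ℝ) (ha : 0 ≤ a) (hb : 0 ≤ b) (hab : b = 0 → a = 0) (ht : 0 < t) :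
    a * Real.log t + a - b * t ≤ a * Real.log (a / b) := by
  rcases ha.eq_or_lt with h0 | h0
  · subst h0; simp; positivity
  · have hb' : 0 < b := lt_of_le_of_ne hb fun h => h0.ne' (hab h.symm)
    have h1 := Real.one_sub_inv_le_log_of_pos (show 0 < a / b / t by positivity)
    rw [Real.log_div (by positivity) (by positivity)] at h1
    have h2 := mul_le_mul_of_nonneg_left h1 h0.le
    have h3 : a * (1 - (a / b / t)⁻¹) = a - b * t := by field_simp
    rw [h3] at h2
    linarith

lemma logsum (a₁ a₂ b₁ b₂ : ℝ) (ha₁ : 0 ≤ a₁) (ha₂ : 0 ≤ a₂) (hb₁ : 0 ≤ b₁) (hb₂ : 0 ≤ b₂)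
    (h₁ : b₁ = 0 → a₁ = 0) (h₂ : b₂ = 0 → a₂ = 0) :
    (a₁ + a₂) * Real.log ((a₁ + a₂) / (b₁ + b₂)) ≤
      a₁ * Real.log (a₁ / b₁) + a₂ * Real.log (a₂ / b₂) := by
  rcases (add_nonneg ha₁ ha₂).eq_or_lt with h0 | h0
  · have : a₁ = 0 := by linarith
    have h2 : a₂ = 0 := by linarith
    simp [h2, this]
  · have hB : 0 < b₁ + b₂ := by
      refine lt_of_le_of_ne (add_nonneg hb₁ hb₂) fun h => ?_
      have := h₁ (by linarith)
      have := h₂ (by linarith)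
      linarith
    have ht : 0 < (a₁ + a₂) / (b₁ + b₂) := div_pos h0 hB
    have e1 := key a₁ b₁ _ ha₁ hb₁ h₁ ht
    have e2 := key a₂ b₂ _ ha₂ hb₂ h₂ ht
    have e3 : (b₁ + b₂) * ((a₁ + a₂) / (b₁ + b₂)) = a₁ + a₂ := by field_simp
    nlinarith

lemma xlog_smul (s a b : ℝ) : (s * a) * Real.log ((s * a) / (s * b)) = s * (a * Real.log (a / b)) := by
  by_cases hs : s = 0
  · simp [hs]
  · rw [mul_div_mul_left _ _ hs]; ring

section
variable {Pol Obs Mod I : Type*}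
variable [Fintype Pol] [Fintype Obs] [Fintype Mod] [Fintype I] [DecidableEq I]

/-- cell weight -/
def wt (part : Mod × Pol → Option I) (ν : Mod × Pol → ℝ) (i : I) : ℝ :=
  ∑ mp : Mod × Pol, if part mp = some i then ν mp else 0

/-- unnormalised cell observation weight -/
def am (q : Mod → Pol → Obs → ℝ) (part : Mod × Pol → Option I) (ν : Mod × Pol → ℝ) (π : Pol)
    (i : I) (o : Obs) : ℝ :=
  ∑ mp : Mod × Pol, if part mp = some i then ν mp * q mp.1 π o else 0

/-- information term with reference `b` -/
def Hd (q : Mod → Pol → Obs → ℝ) (part : Mod × Pol → Option I) (ν : Mod × Pol → ℝ) (π : Pol)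
    (b : Obs → ℝ) : ℝ :=
  ∑ i : I, ∑ o : Obs, am q part ν π i o * Real.log (am q part ν π i o / (wt part ν i * b o))

/-- regret -/
def Rg (V : Mod → Pol → ℝ) (ν : Mod × Pol → ℝ) (π : Pol) : ℝ :=
  ∑ mp : Mod × Pol, ν mp * (V mp.1 mp.2 - V mp.1 π)

/-- the set of distributions on `Ψ` -/
def TT (part : Mod × Pol → Option I) : Set (Mod × Pol → ℝ) :=
  {ν | (∀ mp, 0 ≤ ν mp) ∧ ∑ mp, ν mp = 1 ∧ ∀ mp, part mp = none → ν mp = 0}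

variable {q : Mod → Pol → Obs → ℝ} {V : Mod → Pol → ℝ} {part : Mod × Pol → Option I} {η : ℝ}

lemma TT_convex : Convex ℝ (TT part) := by
  rintro x ⟨hx1, hx2, hx3⟩ y ⟨hy1, hy2, hy3⟩ s t hs ht hst
  refine ⟨fun mp => ?_, ?_, fun mp h => ?_⟩
  · have := hx1 mp
    have := hy1 mp
    simp only [Pi.add_apply, Pi.smul_apply, smul_eq_mul]; positivity
  · simp only [Pi.add_apply, Pi.smul_apply, smul_eq_mul, Finset.sum_add_distrib, ← Finset.mul_sum,
      hx2, hy2]; linarith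
  · simp [hx3 mp h, hy3 mp h]

lemma wt_nonneg {ν : Mod × Pol → ℝ} (h : ∀ mp, 0 ≤ ν mp) (i : I) : 0 ≤ wt part ν i :=
  Finset.sum_nonneg fun mp _ => by split_ifs <;> simp [h]

lemma am_nonneg (hq : ∀ m π, (∀ o, 0 ≤ q m π o) ∧ ∑ o, q m π o = 1)
    {ν : Mod × Pol → ℝ} (h : ∀ mp, 0 ≤ ν mp) (π : Pol) (i : I) (o : Obs) :
    0 ≤ am q part ν π i o :=
  Finset.sum_nonneg fun mp _ => by
    split_ifs
    · exact mul_nonneg (h _) ((hq _ _).1 _)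
    · exact le_rfl

lemma sum_cells (g : Mod × Pol → ℝ) (hg : ∀ mp, part mp = none → g mp = 0) :
    ∑ i : I, ∑ mp : Mod × Pol, (if part mp = some i then g mp else 0) = ∑ mp, g mp := by
  rw [Finset.sum_comm]
  refine Finset.sum_congr rfl fun mp _ => ?_
  cases h : part mp with
  | none => simp [hg mp h]
  | some j => simp

lemma sum_wt {ν : Mod × Pol → ℝ} (h : ν ∈ TT part) : ∑ i, wt part ν i = 1 := by
  rw [← h.2.1]; exact sum_cells ν h.2.2

lemma sum_am {ν : Mod × Pol → ℝ} (h : ν ∈ TT part) (π : Pol) (o : Obs) :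
    ∑ i, am q part ν π i o = pairMixObs q ν π o :=
  sum_cells (fun mp => ν mp * q mp.1 π o) fun mp hm => by simp [h.2.2 mp hm]

lemma sum_am_obs (hq : ∀ m π, (∀ o, 0 ≤ q m π o) ∧ ∑ o, q m π o = 1)
    (ν : Mod × Pol → ℝ) (π : Pol) (i : I) :
    ∑ o, am q part ν π i o = wt part ν i := by
  unfold am wt
  rw [Finset.sum_comm]
  refine Finset.sum_congr rfl fun mp _ => ?_
  split_ifs
  · rw [← Finset.mul_sum, (hq _ _).2, mul_one]
  · simp

lemma am_zero_of_wt (hq : ∀ m π, (∀ o, 0 ≤ q m π o) ∧ ∑ o, q m π o = 1)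
    {ν : Mod × Pol → ℝ} (h : ∀ mp, 0 ≤ ν mp) (π : Pol) (i : I) (o : Obs)
    (hw : wt part ν i = 0) : am q part ν π i o = 0 := by
  rw [← sum_am_obs hq ν π i] at hw
  exact (Finset.sum_eq_zero_iff_of_nonneg fun o _ => am_nonneg hq h π i o).mp hw o
    (Finset.mem_univ _)

lemma pair_nonneg (hq : ∀ m π, (∀ o, 0 ≤ q m π o) ∧ ∑ o, q m π o = 1)
    {ν : Mod × Pol → ℝ} (h : ∀ mp, 0 ≤ ν mp) (π : Pol) (o : Obs) :
    0 ≤ pairMixObs q ν π o :=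
  Finset.sum_nonneg fun mp _ => mul_nonneg (h _) ((hq _ _).1 _)

lemma am_zero_of_pair (hq : ∀ m π, (∀ o, 0 ≤ q m π o) ∧ ∑ o, q m π o = 1)
    {ν : Mod × Pol → ℝ} (h : ν ∈ TT part) (π : Pol) (i : I) (o : Obs)
    (hw : pairMixObs q ν π o = 0) : am q part ν π i o = 0 := by
  rw [← sum_am h π o] at hw
  exact (Finset.sum_eq_zero_iff_of_nonneg fun i _ => am_nonneg hq h.1 π i o).mp hw i
    (Finset.mem_univ _)

lemma sum_pair (hq : ∀ m π, (∀ o, 0 ≤ q m π o) ∧ ∑ o, q m π o = 1)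
    {ν : Mod × Pol → ℝ} (h : ∑ mp, ν mp = 1) (π : Pol) :
    ∑ o, pairMixObs q ν π o = 1 := by
  unfold pairMixObs
  rw [Finset.sum_comm, ← h]
  exact Finset.sum_congr rfl fun mp _ => by rw [← Finset.mul_sum, (hq _ _).2, mul_one]

lemma sum_mix (hq : ∀ m π, (∀ o, 0 ≤ q m π o) ∧ ∑ o, q m π o = 1)
    (μ : FDist Mod) (π : Pol) : ∑ o, mixObs q μ.p π o = 1 := by
  unfold mixObs
  rw [Finset.sum_comm, ← μ.sum_one]
  exact Finset.sum_congr rfl fun mp _ => by rw [← Finset.mul_sum, (hq _ _).2, mul_one]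

lemma mix_nonneg (hq : ∀ m π, (∀ o, 0 ≤ q m π o) ∧ ∑ o, q m π o = 1)
    (μ : FDist Mod) (π : Pol) (o : Obs) : 0 ≤ mixObs q μ.p π o :=
  Finset.sum_nonneg fun m _ => mul_nonneg (μ.nonneg _) ((hq _ _).1 _)

lemma am_lin (ν μ : Mod × Pol → ℝ) (s t : ℝ) (π : Pol) (i : I) (o : Obs) :
    am q part (s • ν + t • μ) π i o = s * am q part ν π i o + t * am q part μ π i o := by
  unfold am
  rw [Finset.mul_sum, Finset.mul_sum, ← Finset.sum_add_distrib]
  refine Finset.sum_congr rfl fun mp _ => ?_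
  split_ifs
  · simp only [Pi.add_apply, Pi.smul_apply, smul_eq_mul]; ring
  · simp

lemma wt_lin (ν μ : Mod × Pol → ℝ) (s t : ℝ) (i : I) :
    wt part (s • ν + t • μ) i = s * wt part ν i + t * wt part μ i := by
  unfold wt
  rw [Finset.mul_sum, Finset.mul_sum, ← Finset.sum_add_distrib]
  refine Finset.sum_congr rfl fun mp _ => ?_
  split_ifs
  · simp only [Pi.add_apply, Pi.smul_apply, smul_eq_mul]
  · simp

lemma am_zero_of_full {b : Obs → ℝ} {π : Pol} (hb : ∀ o, b o = 0 → ∀ m, q m π o = 0)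
    (ν : Mod × Pol → ℝ) (i : I) (o : Obs) (h : b o = 0) : am q part ν π i o = 0 := by
  unfold am
  exact Finset.sum_eq_zero fun mp _ => by simp [hb o h]

lemma Hd_convex (hq : ∀ m π, (∀ o, 0 ≤ q m π o) ∧ ∑ o, q m π o = 1)
    {b : Obs → ℝ} {π : Pol} (hb0 : ∀ o, 0 ≤ b o) (hb : ∀ o, b o = 0 → ∀ m, q m π o = 0) :
    ConvexOn ℝ (TT part) (fun ν => Hd q part ν π b) := by
  refine ⟨TT_convex, fun ν hν μ hμ s t hs ht _ => ?_⟩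
  simp only [smul_eq_mul]
  unfold Hd
  rw [Finset.mul_sum, Finset.mul_sum, ← Finset.sum_add_distrib]
  refine Finset.sum_le_sum fun i _ => ?_
  rw [Finset.mul_sum, Finset.mul_sum, ← Finset.sum_add_distrib]
  refine Finset.sum_le_sum fun o _ => ?_
  rw [am_lin, wt_lin]
  have hz : ∀ {ν : Mod × Pol → ℝ}, ν ∈ TT part → ∀ s : ℝ,
      s * (wt part ν i * b o) = 0 → s * am q part ν π i o = 0 := by
    intro ν hν s h
    rcases mul_eq_zero.mp h with h | h
    · simp [h]
    rcases mul_eq_zero.mp h with h | h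
    · simp [am_zero_of_wt hq hν.1 π i o h]
    · simp [am_zero_of_full hb ν i o h]
  have h := logsum (s * am q part ν π i o) (t * am q part μ π i o)
    (s * (wt part ν i * b o)) (t * (wt part μ i * b o))
    (mul_nonneg hs (am_nonneg hq hν.1 π i o)) (mul_nonneg ht (am_nonneg hq hμ.1 π i o))
    (mul_nonneg hs (mul_nonneg (wt_nonneg hν.1 i) (hb0 o)))
    (mul_nonneg ht (mul_nonneg (wt_nonneg hμ.1 i) (hb0 o)))
    (hz hν s) (hz hμ t)
  rw [xlog_smul, xlog_smul] at h
  have e : (s * wt part ν i + t * wt part μ i) * b o =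
      s * (wt part ν i * b o) + t * (wt part μ i * b o) := by ring
  rw [e]
  exact h

lemma Rg_lin (ν μ : Mod × Pol → ℝ) (s t : ℝ) (π : Pol) :
    Rg V (s • ν + t • μ) π = s * Rg V ν π + t * Rg V μ π := by
  unfold Rg
  rw [Finset.mul_sum, Finset.mul_sum, ← Finset.sum_add_distrib]
  refine Finset.sum_congr rfl fun mp _ => ?_
  simp only [Pi.add_apply, Pi.smul_apply, smul_eq_mul]; ring

lemma F_concave (hq : ∀ m π, (∀ o, 0 ≤ q m π o) ∧ ∑ o, q m π o = 1) (hη : 0 < η)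
    {b : Obs → ℝ} {π : Pol} (hb0 : ∀ o, 0 ≤ b o) (hb : ∀ o, b o = 0 → ∀ m, q m π o = 0) :
    ConcaveOn ℝ (TT part) (fun ν => Rg V ν π - η⁻¹ * Hd q part ν π b) := by
  refine ⟨TT_convex, fun ν hν μ hμ s t hs ht hst => ?_⟩
  have h := (Hd_convex (part := part) hq hb0 hb).2 hν hμ hs ht hst
  have h2 := mul_le_mul_of_nonneg_left h (inv_nonneg.mpr hη.le)
  simp only [smul_eq_mul] at h2 ⊢
  rw [Rg_lin]
  linarith

/-- Gibbs inequality -/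
lemma gibbs {X : Type*} [Fintype X] (a b : X → ℝ) (ha : ∀ x, 0 ≤ a x) (hb : ∀ x, 0 ≤ b x)
    (hab : ∀ x, b x = 0 → a x = 0) (h : ∑ x, a x = ∑ x, b x) :
    0 ≤ ∑ x, a x * Real.log (a x / b x) := by
  calc (0 : ℝ) = ∑ x, (a x * Real.log 1 + a x - b x * 1) := by
        simp [Finset.sum_sub_distrib, h]
    _ ≤ _ := Finset.sum_le_sum fun x _ => key _ _ _ (ha x) (hb x) (hab x) one_pos

/-- `Hd` at the mixture is minimal. -/
lemma Hd_min (hq : ∀ m π, (∀ o, 0 ≤ q m π o) ∧ ∑ o, q m π o = 1)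
    {b : Obs → ℝ} {π : Pol} (hb0 : ∀ o, 0 ≤ b o) (hb : ∀ o, b o = 0 → ∀ m, q m π o = 0)
    (hb1 : ∑ o, b o = 1) {ν : Mod × Pol → ℝ} (hν : ν ∈ TT part) :
    Hd q part ν π (pairMixObs q ν π) ≤ Hd q part ν π b := by
  have hz : ∀ o, b o = 0 → pairMixObs q ν π o = 0 := fun o h =>
    Finset.sum_eq_zero fun mp _ => by simp [hb o h]
  have hg := gibbs (pairMixObs q ν π) b (pair_nonneg hq hν.1 π) hb0 hz
    (by rw [sum_pair hq hν.2.1, hb1])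
  have : Hd q part ν π b - Hd q part ν π (pairMixObs q ν π) =
      ∑ o, pairMixObs q ν π o * Real.log (pairMixObs q ν π o / b o) := by
    unfold Hd
    rw [Finset.sum_comm, Finset.sum_comm (s := (Finset.univ : Finset I)),
      ← Finset.sum_sub_distrib]
    refine Finset.sum_congr rfl fun o _ => ?_
    rw [← Finset.sum_sub_distrib]
    conv_rhs => rw [← sum_am hν π o, Finset.sum_mul, sum_am hν π o]
    refine Finset.sum_congr rfl fun i _ => ?_
    by_cases h0 : am q part ν π i o = 0
    · simp [h0]
    have h1 : wt part ν i ≠ 0 := fun h => h0 (am_zero_of_wt hq hν.1 π i o h)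
    have h2 : b o ≠ 0 := fun h => h0 (am_zero_of_full hb ν i o h)
    have h3 : pairMixObs q ν π o ≠ 0 := fun h => h0 (am_zero_of_pair hq hν π i o h)
    rw [Real.log_div h0 (mul_ne_zero h1 h2), Real.log_div h0 (mul_ne_zero h1 h3),
      Real.log_div h3 h2, Real.log_mul h1 h2, Real.log_mul h1 h3]
    ring
  linarith

/-- replacing `ρ` by the marginal decreases information. -/
lemma L_min (hq : ∀ m π, (∀ o, 0 ≤ q m π o) ∧ ∑ o, q m π o = 1)
    (ρ : FDist I) (π : Pol) {ν : Mod × Pol → ℝ} (hν : ν ∈ TT part)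
    (hρ : ∀ i, ρ.p i = 0 → wt part ν i = 0) :
    Hd q part ν π (pairMixObs q ν π) ≤ ∑ i, ∑ o, am q part ν π i o *
      Real.log (am q part ν π i o / (ρ.p i * pairMixObs q ν π o)) := by
  have hg := gibbs (wt part ν) ρ.p (wt_nonneg hν.1) ρ.nonneg hρ (by rw [sum_wt hν, ρ.sum_one])
  have : ∑ i, ∑ o, am q part ν π i o *
      Real.log (am q part ν π i o / (ρ.p i * pairMixObs q ν π o)) -
      Hd q part ν π (pairMixObs q ν π) =
      ∑ i, wt part ν i * Real.log (wt part ν i / ρ.p i) := by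
    unfold Hd
    rw [← Finset.sum_sub_distrib]
    refine Finset.sum_congr rfl fun i _ => ?_
    rw [← Finset.sum_sub_distrib]
    conv_rhs => rw [← sum_am_obs hq ν π i, Finset.sum_mul, sum_am_obs hq ν π i]
    refine Finset.sum_congr rfl fun o _ => ?_
    by_cases h0 : am q part ν π i o = 0
    · simp [h0]
    have h1 : wt part ν i ≠ 0 := fun h => h0 (am_zero_of_wt hq hν.1 π i o h)
    have h2 : ρ.p i ≠ 0 := fun h => h1 (hρ i h)
    have h3 : pairMixObs q ν π o ≠ 0 := fun h => h0 (am_zero_of_pair hq hν π i o h)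
    rw [Real.log_div h0 (mul_ne_zero h2 h3), Real.log_div h0 (mul_ne_zero h1 h3),
      Real.log_div h1 h2, Real.log_mul h2 h3, Real.log_mul h1 h3]
    ring
  linarith

lemma coe_sum' {X : Type*} (s : Finset X) (f : X → ℝ) :
    ((∑ x ∈ s, f x : ℝ) : EReal) = ∑ x ∈ s, (f x : EReal) := by
  classical
  induction s using Finset.induction_on with
  | empty => simp
  | insert a s ha ih => rw [Finset.sum_insert ha, Finset.sum_insert ha, EReal.coe_add, ih]

lemma sum_ne_bot' {X : Type*} (s : Finset X) (f : X → EReal) (hf : ∀ x ∈ s, f x ≠ ⊥) :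
    ∑ x ∈ s, f x ≠ ⊥ := by
  classical
  induction s using Finset.induction_on with
  | empty => simp
  | insert a s ha ih =>
    rw [Finset.sum_insert ha, EReal.add_ne_bot_iff]
    exact ⟨hf a (Finset.mem_insert_self _ _), ih fun x hx => hf x (Finset.mem_insert_of_mem hx)⟩

lemma sum_top' {X : Type*} [Fintype X] (f : X → EReal) (hf : ∀ x, f x ≠ ⊥) (x₀ : X)
    (h : f x₀ = ⊤) : ∑ x, f x = ⊤ := by
  classical
  rw [← Finset.add_sum_erase _ _ (Finset.mem_univ x₀), h]
  exact EReal.top_add_of_ne_bot (sum_ne_bot' _ _ fun x _ => hf x)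

lemma KL_coe {X : Type*} [Fintype X] {p q : X → ℝ} (h : ∀ x, q x = 0 → p x = 0) :
    KL p q = ((∑ x, p x * Real.log (p x / q x) : ℝ) : EReal) := by
  unfold KL; rw [if_pos h]

lemma KL_top {X : Type*} [Fintype X] {p q : X → ℝ} (h : ¬ ∀ x, q x = 0 → p x = 0) :
    KL p q = ⊤ := by
  unfold KL; rw [if_neg h]

lemma KL_ne_bot {X : Type*} [Fintype X] (p q : X → ℝ) : KL p q ≠ ⊥ := by
  by_cases h : ∀ x, q x = 0 → p x = 0
  · rw [KL_coe h]; exact EReal.coe_ne_bot _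
  · rw [KL_top h]; exact top_ne_bot

lemma coe_mul_KL_ne_bot {X : Type*} [Fintype X] (p q : X → ℝ) (c : ℝ) (hc : 0 ≤ c) :
    (c : EReal) * KL p q ≠ ⊥ := by
  by_cases h : ∀ x, q x = 0 → p x = 0
  · rw [KL_coe h, ← EReal.coe_mul]; exact EReal.coe_ne_bot _
  · rw [KL_top h]
    rcases hc.eq_or_lt with h0 | h0
    · simp [← h0]
    · rw [EReal.coe_mul_top_of_pos h0]; exact top_ne_bot

lemma AIR_eq (hq : ∀ m π, (∀ o, 0 ≤ q m π o) ∧ ∑ o, q m π o = 1)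
    (ρ : I → ℝ) (p : Pol → ℝ) {ν : Mod × Pol → ℝ} (hν : ν ∈ TT part)
    (hρ : ∀ i, ρ i = 0 → wt part ν i = 0) :
    AIR q V part η ρ p ν = ((∑ π, p π * (Rg V ν π - η⁻¹ * ∑ i, ∑ o, am q part ν π i o *
      Real.log (am q part ν π i o / (ρ i * pairMixObs q ν π o))) : ℝ) : EReal) := by
  have hKL : ∀ π o, KL (post q part ν π o) ρ =
      ((∑ i, post q part ν π o i * Real.log (post q part ν π o i / ρ i) : ℝ) : EReal) := by
    intro π o
    refine KL_coe fun i hi => ?_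
    have := am_zero_of_wt hq hν.1 π i o (hρ i hi)
    unfold post
    unfold am at this
    rw [this, zero_div]
  unfold AIR
  simp only [hKL, ← EReal.coe_mul, ← coe_sum', ← EReal.coe_sub]
  congr 1
  rw [Finset.mul_sum, ← Finset.sum_sub_distrib]
  refine Finset.sum_congr rfl fun π _ => ?_
  have e1 : ∑ mp : Mod × Pol, p π * ν mp * (V mp.1 mp.2 - V mp.1 π) = p π * Rg V ν π := by
    unfold Rg
    rw [Finset.mul_sum]
    exact Finset.sum_congr rfl fun _ _ => by ring
  have e2 : ∑ mp : Mod × Pol, ∑ o, p π * ν mp * q mp.1 π o *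
      ∑ i, post q part ν π o i * Real.log (post q part ν π o i / ρ i) =
      p π * ∑ i, ∑ o, am q part ν π i o *
      Real.log (am q part ν π i o / (ρ i * pairMixObs q ν π o)) := by
    rw [Finset.sum_comm, Finset.sum_comm (s := (Finset.univ : Finset I)), Finset.mul_sum]
    refine Finset.sum_congr rfl fun o _ => ?_
    rw [← Finset.sum_mul]
    have e3 : ∑ mp : Mod × Pol, p π * ν mp * q mp.1 π o = p π * pairMixObs q ν π o := by
      unfold pairMixObs
      rw [Finset.mul_sum]
      exact Finset.sum_congr rfl fun _ _ => by ring
    rw [e3, mul_assoc, Finset.mul_sum]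
    congr 1
    refine Finset.sum_congr rfl fun i _ => ?_
    change pairMixObs q ν π o * (am q part ν π i o / pairMixObs q ν π o *
      Real.log (am q part ν π i o / pairMixObs q ν π o / ρ i)) = _
    by_cases h : pairMixObs q ν π o = 0
    · simp [h, am_zero_of_pair hq hν π i o h]
    · rw [div_div, mul_comm (ρ i), ← mul_assoc, mul_div_cancel₀ _ h]
  rw [e1, e2]
  ring

lemma AIR_le (hq : ∀ m π, (∀ o, 0 ≤ q m π o) ∧ ∑ o, q m π o = 1) (hη : 0 < η)
    (ρ : FDist I) (p : FDist Pol) {ν : Mod × Pol → ℝ} (hν : ν ∈ TT part) :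
    AIR q V part η ρ.p p.p ν ≤
      ((∑ π, p.p π * (Rg V ν π - η⁻¹ * Hd q part ν π (pairMixObs q ν π)) : ℝ) : EReal) := by
  by_cases hρ : ∀ i, ρ.p i = 0 → wt part ν i = 0
  · rw [AIR_eq hq _ _ hν hρ, EReal.coe_le_coe_iff]
    refine Finset.sum_le_sum fun π _ => mul_le_mul_of_nonneg_left ?_ (p.nonneg π)
    have := mul_le_mul_of_nonneg_left (L_min hq ρ π hν hρ) (inv_nonneg.mpr hη.le)
    linarith
  · push Not at hρ
    obtain ⟨i, hi, hw⟩ := hρ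
    obtain ⟨π, -, hπ⟩ : ∃ π ∈ Finset.univ, p.p π ≠ 0 :=
      Finset.exists_ne_zero_of_sum_ne_zero (by rw [p.sum_one]; exact one_ne_zero)
    obtain ⟨mp, -, hmp⟩ := Finset.exists_ne_zero_of_sum_ne_zero hw
    obtain ⟨o, -, ho⟩ : ∃ o ∈ Finset.univ, q mp.1 π o ≠ 0 :=
      Finset.exists_ne_zero_of_sum_ne_zero (by rw [(hq _ _).2]; exact one_ne_zero)
    have hpart : part mp = some i := by
      by_contra h; simp [h] at hmp
    rw [if_pos hpart] at hmp
    have pos : 0 < p.p π * ν mp * q mp.1 π o :=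
      mul_pos (mul_pos (lt_of_le_of_ne (p.nonneg _) hπ.symm) (lt_of_le_of_ne (hν.1 _) hmp.symm))
        (lt_of_le_of_ne ((hq _ _).1 _) ho.symm)
    have pos2 : 0 < ν mp * q mp.1 π o := mul_pos (lt_of_le_of_ne (hν.1 _) hmp.symm)
        (lt_of_le_of_ne ((hq _ _).1 _) ho.symm)
    have ham : am q part ν π i o ≠ 0 := by
      intro h
      have := (Finset.sum_eq_zero_iff_of_nonneg (fun mp _ => by
        split_ifs
        · exact mul_nonneg (hν.1 _) ((hq _ _).1 _)
        · exact le_rfl)).mp h mp (Finset.mem_univ _)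
      rw [if_pos hpart] at this
      exact pos2.ne' this
    have hb : pairMixObs q ν π o ≠ 0 := fun h => ham (am_zero_of_pair hq hν π i o h)
    have hK : KL (post q part ν π o) ρ.p = ⊤ := by
      refine KL_top fun h => ?_
      have h1 : am q part ν π i o / pairMixObs q ν π o = 0 := h i hi
      exact div_ne_zero ham hb h1
    have nb : ∀ π mp o, ((p.p π * ν mp * q mp.1 π o : ℝ) : EReal) *
        KL (post q part ν π o) ρ.p ≠ ⊥ := fun π mp o =>
      coe_mul_KL_ne_bot _ _ _ (mul_nonneg (mul_nonneg (p.nonneg _) (hν.1 _)) ((hq _ _).1 _))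
    have ht : ∑ π : Pol, ∑ mp : Mod × Pol, ∑ o : Obs,
        ((p.p π * ν mp * q mp.1 π o : ℝ) : EReal) * KL (post q part ν π o) ρ.p = ⊤ := by
      refine sum_top' _ (fun π => sum_ne_bot' _ _ fun mp _ => sum_ne_bot' _ _ fun o _ =>
        nb π mp o) π ?_
      refine sum_top' _ (fun mp => sum_ne_bot' _ _ fun o _ => nb π mp o) mp ?_
      refine sum_top' _ (fun o => nb π mp o) o ?_
      rw [hK, EReal.coe_mul_top_of_pos pos]
    unfold AIR
    rw [ht, EReal.coe_mul_top_of_pos (inv_pos.mpr hη), EReal.sub_top]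
    exact bot_le

/-- real-valued KL -/
def KR (P b : Obs → ℝ) : ℝ := ∑ o, P o * Real.log (P o / b o)

lemma reg_eq (ν : Mod × Pol → ℝ) (π : Pol) :
    (∑ mp : Mod × Pol, ν mp * V mp.1 mp.2) - (∑ mp : Mod × Pol, ν mp * V mp.1 π) = Rg V ν π := by
  unfold Rg
  rw [← Finset.sum_sub_distrib]
  exact Finset.sum_congr rfl fun _ _ => by ring

/-- the summand in `DECPhi` -/
def DT (q : Mod → Pol → Obs → ℝ) (V : Mod → Pol → ℝ) (η : ℝ) (p : Pol → ℝ) (ν : Mod × Pol → ℝ)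
    (μ : Mod → ℝ) : EReal :=
  ((∑ π : Pol, p π *
          ((∑ mp : Mod × Pol, ν mp * V mp.1 mp.2)
            - (∑ mp : Mod × Pol, ν mp * V mp.1 π)) : ℝ) : EReal)
        - ((η⁻¹ : ℝ) : EReal) *
            ∑ π : Pol, ((p π : ℝ) : EReal) * KL (pairMixObs q ν π) (mixObs q μ π)

lemma DT_eq (p : Pol → ℝ) (ν : Mod × Pol → ℝ) (μ : Mod → ℝ)
    (h : ∀ π o, mixObs q μ π o = 0 → pairMixObs q ν π o = 0) :
    DT q V η p ν μ = ((∑ π, p π * (Rg V ν π - η⁻¹ * KR (pairMixObs q ν π) (mixObs q μ π)) : ℝ) :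
      EReal) := by
  unfold DT
  simp only [fun π => KL_coe (h π), reg_eq, ← EReal.coe_mul, ← coe_sum', ← EReal.coe_sub]
  congr 1
  rw [Finset.mul_sum, ← Finset.sum_sub_distrib]
  refine Finset.sum_congr rfl fun π _ => ?_
  unfold KR
  ring

lemma DT_le (hq : ∀ m π, (∀ o, 0 ≤ q m π o) ∧ ∑ o, q m π o = 1) (hη : 0 < η)
    (p : FDist Pol) (ν : FDist (Mod × Pol)) (μ μ' : FDist Mod) (δ : ℝ)
    (h : ∀ m, Real.exp (-δ) * μ.p m ≤ μ'.p m) :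
    DT q V η p.p ν.p μ.p ≤ ((∑ π, p.p π * (Rg V ν.p π -
      η⁻¹ * KR (pairMixObs q ν.p π) (mixObs q μ'.p π)) + η⁻¹ * δ : ℝ) : EReal) := by
  have hmix : ∀ π o, Real.exp (-δ) * mixObs q μ.p π o ≤ mixObs q μ'.p π o := by
    intro π o
    unfold mixObs
    rw [Finset.mul_sum]
    refine Finset.sum_le_sum fun m _ => ?_
    rw [← mul_assoc]
    exact mul_le_mul_of_nonneg_right (h m) ((hq _ _).1 _)
  have hterm : ∀ π, ((p.p π * (KR (pairMixObs q ν.p π) (mixObs q μ'.p π) - δ) : ℝ) : EReal) ≤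
      ((p.p π : ℝ) : EReal) * KL (pairMixObs q ν.p π) (mixObs q μ.p π) := by
    intro π
    by_cases hac : ∀ o, mixObs q μ.p π o = 0 → pairMixObs q ν.p π o = 0
    · rw [KL_coe hac, ← EReal.coe_mul, EReal.coe_le_coe_iff]
      refine mul_le_mul_of_nonneg_left ?_ (p.nonneg π)
      have h1 : δ = ∑ o, pairMixObs q ν.p π o * δ := by
        rw [← Finset.sum_mul, sum_pair hq ν.sum_one, one_mul]
      unfold KR
      conv_lhs => rw [h1]
      rw [← Finset.sum_sub_distrib]
      refine Finset.sum_le_sum fun o _ => ?_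
      rcases (pair_nonneg hq ν.nonneg π o).eq_or_lt with h0 | h0
      · simp [← h0]
      · have hb : 0 < mixObs q μ.p π o :=
          lt_of_le_of_ne (mix_nonneg hq μ π o) fun hh => h0.ne' (hac o hh.symm)
        have he : 0 < Real.exp (-δ) * mixObs q μ.p π o := mul_pos (Real.exp_pos _) hb
        have hb' : 0 < mixObs q μ'.p π o := lt_of_lt_of_le he (hmix π o)
        rw [← mul_sub]
        refine mul_le_mul_of_nonneg_left ?_ h0.le
        have hl := Real.log_le_log he (hmix π o)
        rw [Real.log_mul (Real.exp_pos _).ne' hb.ne', Real.log_exp] at hl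
        rw [Real.log_div h0.ne' hb'.ne', Real.log_div h0.ne' hb.ne']
        linarith
    · rw [KL_top hac]
      rcases (p.nonneg π).eq_or_lt with h0 | h0
      · simp [← h0]
      · rw [EReal.coe_mul_top_of_pos h0]; exact le_top
  have hsum := Finset.sum_le_sum fun π (_ : π ∈ Finset.univ) => hterm π
  rw [← coe_sum'] at hsum
  have h2 := mul_le_mul_of_nonneg_left hsum
    (show (0 : EReal) ≤ ((η⁻¹ : ℝ) : EReal) from by
      exact_mod_cast inv_nonneg.mpr hη.le)
  unfold DT
  refine (EReal.sub_le_sub le_rfl h2).trans ?_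
  rw [← EReal.coe_mul, ← EReal.coe_sub, EReal.coe_le_coe_iff]
  refine le_of_eq ?_
  simp only [reg_eq, mul_sub, Finset.sum_sub_distrib, ← Finset.sum_mul, p.sum_one, Finset.mul_sum]
  rw [sub_add, one_mul]
  congr 2
  exact Finset.sum_congr rfl fun _ _ => by ring

lemma conc_mem {ν : FDist (Mod × Pol)} {i : I} (h : ∀ mp, ν.p mp ≠ 0 → part mp = some i) :
    ν.p ∈ TT part :=
  ⟨ν.nonneg, ν.sum_one, fun mp hm => by
    by_contra h0
    rw [h mp h0] at hm
    simp at hm⟩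

lemma Hd_conc {ν : FDist (Mod × Pol)} {i : I} (h : ∀ mp, ν.p mp ≠ 0 → part mp = some i)
    (π : Pol) (b : Obs → ℝ) : Hd q part ν.p π b = KR (pairMixObs q ν.p π) b := by
  have hw : wt part ν.p i = 1 := by
    rw [← ν.sum_one]
    refine Finset.sum_congr rfl fun mp _ => ?_
    by_cases h0 : ν.p mp = 0
    · simp [h0]
    · rw [if_pos (h mp h0)]
  have ha : ∀ o, am q part ν.p π i o = pairMixObs q ν.p π o := by
    intro o
    refine Finset.sum_congr rfl fun mp _ => ?_
    by_cases h0 : ν.p mp = 0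
    · simp [h0]
    · rw [if_pos (h mp h0)]
  have ha' : ∀ j, j ≠ i → ∀ o, am q part ν.p π j o = 0 := by
    intro j hj o
    refine Finset.sum_eq_zero fun mp _ => ?_
    by_cases h0 : ν.p mp = 0
    · simp [h0]
    · rw [if_neg]
      rw [h mp h0]
      intro hh
      exact hj (Option.some.inj hh).symm
  unfold Hd KR
  rw [Finset.sum_eq_single i]
  · simp [ha, hw]
  · intro j _ hj
    simp [ha' j hj]
  · simp

end
end AirProof

/-- **Lemma (equivalence of `AIR^Φ` max-min and the `Φ`-dependent DEC).**
For every `η > 0`,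
`max_{ρ∈Δ(Φ)} max_{ν∈Δ(Ψ)} min_{p∈Δ(Π)} AIR^Φ_{ρ,η}(p,ν) = DEC^KL_η(𝓜, Φ)`. -/
theorem airmaxmin_eq_DECPhi
    {Pol Obs Mod I : Type*}
    [Fintype Pol] [Fintype Obs] [Fintype Mod] [Fintype I] [DecidableEq I]
    [Nonempty Pol] [Nonempty Obs] [Nonempty Mod]
    (q : Mod → Pol → Obs → ℝ)
    (hq : ∀ m π, (∀ o, 0 ≤ q m π o) ∧ ∑ o, q m π o = 1)
    (V : Mod → Pol → ℝ)
    (hV : ∀ m π, V m π ∈ Set.Icc (0 : ℝ) 1)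
    (part : Mod × Pol → Option I)
    (hnonempty : ∀ i : I, ∃ mp, part mp = some i)
    (η : ℝ) (hη : 0 < η) :
    AIRmaxmin q V part η = DECPhi q V part η := by
  classical
  apply le_antisymm
  · -- AIR ≤ DEC
    refine iSup_le fun ρ => iSup_le fun ν => ?_
    have hν : ν.1.p ∈ AirProof.TT part := ⟨ν.1.nonneg, ν.1.sum_one, ν.2⟩
    let μ : FDist Mod := ⟨fun m => ∑ π, ν.1.p (m, π),
      fun m => Finset.sum_nonneg fun π _ => ν.1.nonneg _, by
        rw [← ν.1.sum_one, Fintype.sum_prod_type]⟩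
    have hμ : ∀ π o, mixObs q μ.p π o = pairMixObs q ν.1.p π o := by
      intro π o
      simp only [mixObs, pairMixObs, Fintype.sum_prod_type, μ, Finset.sum_mul]
    refine le_trans ?_ (le_iSup _ μ)
    refine iInf_mono fun p => ?_
    refine (AirProof.AIR_le hq hη ρ p hν).trans ?_
    set w := AirProof.wt part ν.1.p with hw
    have hw0 : ∀ i, 0 ≤ w i := AirProof.wt_nonneg hν.1
    let νc : I → (Mod × Pol) → ℝ := fun i mp => if part mp = some i then ν.1.p mp / w i else 0
    have hpair : ∀ i π o, pairMixObs q (νc i) π o = AirProof.am q part ν.1.p π i o / w i := by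
      intro i π o
      simp only [pairMixObs, AirProof.am, νc, Finset.sum_div]
      refine Finset.sum_congr rfl fun mp _ => ?_
      split_ifs <;> ring
    let t : I → ℝ := fun i => ∑ π, p.p π * (AirProof.Rg V (νc i) π -
      η⁻¹ * AirProof.KR (pairMixObs q (νc i) π) (mixObs q μ.p π))
    set g := ∑ π, p.p π * (AirProof.Rg V ν.1.p π -
      η⁻¹ * AirProof.Hd q part ν.1.p π (pairMixObs q ν.1.p π)) with hg
    have hR : ∀ π, ∑ i, w i * AirProof.Rg V (νc i) π = AirProof.Rg V ν.1.p π := by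
      intro π
      unfold AirProof.Rg
      rw [← AirProof.sum_cells (part := part)
        (fun mp => ν.1.p mp * (V mp.1 mp.2 - V mp.1 π)) fun mp hm => by simp [hν.2.2 mp hm]]
      refine Finset.sum_congr rfl fun i _ => ?_
      rw [Finset.mul_sum]
      refine Finset.sum_congr rfl fun mp _ => ?_
      simp only [νc]
      split_ifs with hp
      · by_cases h0 : w i = 0
        · have : ν.1.p mp = 0 := by
            have := (Finset.sum_eq_zero_iff_of_nonneg (fun mp _ => by
              split_ifs
              · exact hν.1 _
              · exact le_rfl)).mp h0 mp (Finset.mem_univ _)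
            rwa [if_pos hp] at this
          simp [this]
        · field_simp
      · simp
    have hH : ∀ π, ∑ i, w i * AirProof.KR (pairMixObs q (νc i) π) (mixObs q μ.p π) =
        AirProof.Hd q part ν.1.p π (pairMixObs q ν.1.p π) := by
      intro π
      unfold AirProof.KR AirProof.Hd
      refine Finset.sum_congr rfl fun i _ => ?_
      rw [Finset.mul_sum]
      refine Finset.sum_congr rfl fun o _ => ?_
      rw [hpair, hμ, div_div, ← mul_assoc]
      by_cases h0 : w i = 0
      · simp [h0, AirProof.am_zero_of_wt hq hν.1 π i o h0]
      · rw [mul_div_cancel₀ _ h0]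
    have hsum : ∑ i, w i * t i = g := by
      simp only [t, hg, ← hR, ← hH, Finset.mul_sum, ← Finset.sum_sub_distrib]
      rw [Finset.sum_comm]
      refine Finset.sum_congr rfl fun π _ => Finset.sum_congr rfl fun i _ => ?_
      ring
    have hw1 : ∑ i, w i = 1 := AirProof.sum_wt hν
    obtain ⟨i, hi, hti⟩ : ∃ i, 0 < w i ∧ g ≤ t i := by
      by_contra hcon
      push Not at hcon
      obtain ⟨j, -, hj⟩ : ∃ j ∈ Finset.univ, w j ≠ 0 :=
        Finset.exists_ne_zero_of_sum_ne_zero (by rw [hw1]; exact one_ne_zero)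
      have hlt : ∑ i, w i * t i < ∑ i, w i * g := by
        refine Finset.sum_lt_sum (fun i _ => ?_) ⟨j, Finset.mem_univ _, ?_⟩
        · rcases (hw0 i).eq_or_lt with h0 | h0
          · simp [← h0]
          · exact mul_le_mul_of_nonneg_left (hcon i h0).le h0.le
        · have h0 : 0 < w j := lt_of_le_of_ne (hw0 j) hj.symm
          exact mul_lt_mul_of_pos_left (hcon j h0) h0
      rw [hsum, ← Finset.sum_mul, hw1, one_mul] at hlt
      exact lt_irrefl _ hlt
    let ν' : {ν : FDist (Mod × Pol) // ∀ mp, ν.p mp ≠ 0 → part mp = some i} :=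
      ⟨⟨νc i, fun mp => by
          simp only [νc]
          split_ifs
          · exact div_nonneg (hν.1 _) hi.le
          · exact le_rfl, by
          have : ∑ mp, νc i mp = w i / w i := by
            conv_rhs => rw [hw]
            simp only [νc, AirProof.wt, Finset.sum_div, hw]
            refine Finset.sum_congr rfl fun mp _ => ?_
            split_ifs <;> simp
          rw [this, div_self hi.ne']⟩, fun mp hm => by
        by_contra h
        exact hm (by simp [νc, h])⟩
    refine le_trans ?_ (le_iSup _ i)
    refine le_trans ?_ (le_iSup _ ν')
    change _ ≤ AirProof.DT q V η p.p (νc i) μ.p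
    rw [AirProof.DT_eq, EReal.coe_le_coe_iff]
    · exact hti
    · intro π o h
      rw [hμ] at h
      rw [hpair, AirProof.am_zero_of_pair hq hν π i o h, zero_div]
  · -- DEC ≤ AIR
    refine iSup_le fun μ => ?_
    rw [← EReal.le_of_forall_lt_iff_le]
    intro c hc
    rcases isEmpty_or_nonempty I with hI | hI
    · refine iInf_le_of_le ⟨fun _ => (Fintype.card Pol : ℝ)⁻¹, fun _ => by positivity, by simp⟩ ?_
      simp
    obtain ⟨c', hc1, hc2⟩ := EReal.lt_iff_exists_real_btwn.mp hc
    have hcc : c' < c := by exact_mod_cast hc2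
    set δ := η * (c - c') with hδ
    have hδ0 : 0 < δ := mul_pos hη (by linarith)
    have hexp : Real.exp (-δ) < 1 := by
      rw [Real.exp_lt_one_iff]; linarith
    have hcard : (0 : ℝ) < Fintype.card Mod := by exact_mod_cast Fintype.card_pos
    have hpos : 0 < (1 - Real.exp (-δ)) / Fintype.card Mod := div_pos (by linarith) hcard
    let μ' : FDist Mod := ⟨fun m => Real.exp (-δ) * μ.p m +
        (1 - Real.exp (-δ)) / Fintype.card Mod,
      fun m => add_nonneg (mul_nonneg (Real.exp_pos _).le (μ.nonneg m)) hpos.le, by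
        rw [Finset.sum_add_distrib, ← Finset.mul_sum, μ.sum_one, Finset.sum_const,
          Finset.card_univ, nsmul_eq_mul, mul_div_cancel₀ _ hcard.ne']
        ring⟩
    have hμ' : ∀ m, Real.exp (-δ) * μ.p m ≤ μ'.p m := fun m => by
      change _ ≤ _ + _
      linarith
    have hμpos : ∀ m, 0 < μ'.p m := fun m =>
      add_pos_of_nonneg_of_pos (mul_nonneg (Real.exp_pos _).le (μ.nonneg m)) hpos
    have hfull : ∀ π o, mixObs q μ'.p π o = 0 → ∀ m, q m π o = 0 := by
      intro π o h m
      have := (Finset.sum_eq_zero_iff_of_nonneg (fun m _ =>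
        mul_nonneg (μ'.nonneg m) ((hq m π).1 o))).mp h m (Finset.mem_univ _)
      exact (mul_eq_zero.mp this).resolve_left (hμpos m).ne'
    have hTne : (AirProof.TT part).Nonempty := by
      obtain ⟨i⟩ := hI
      obtain ⟨mp, hmp⟩ := hnonempty i
      refine ⟨Pi.single mp 1, fun x => ?_, by simp, fun x hx => ?_⟩
      · rw [Pi.single_apply]; split_ifs <;> norm_num
      · rw [Pi.single_apply, if_neg]
        rintro rfl
        rw [hmp] at hx
        simp at hx
    obtain ⟨p, hp⟩ := AirProof.minimax (AirProof.TT part) hTne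
      (fun π ν => AirProof.Rg V ν π - η⁻¹ * AirProof.Hd q part ν π (mixObs q μ'.p π))
      (fun π => AirProof.F_concave hq hη (AirProof.mix_nonneg hq μ' π) (hfull π))
      AirProof.TT_convex c' (by
        intro ν hν
        let ρ : FDist I := ⟨AirProof.wt part ν, AirProof.wt_nonneg hν.1, AirProof.sum_wt hν⟩
        let ν' : {ν : FDist (Mod × Pol) // ∀ mp, part mp = none → ν.p mp = 0} :=
          ⟨⟨ν, hν.1, hν.2.1⟩, hν.2.2⟩
        have h1 : ⨅ p : FDist Pol, AIR q V part η ρ.p p.p ν < c' :=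
          lt_of_le_of_lt ((le_iSup (fun ν : {ν : FDist (Mod × Pol) //
            ∀ mp, part mp = none → ν.p mp = 0} =>
              ⨅ p : FDist Pol, AIR q V part η ρ.p p.p ν.1.p) ν').trans
            (le_iSup (fun ρ : FDist I => ⨆ ν : {ν : FDist (Mod × Pol) //
              ∀ mp, part mp = none → ν.p mp = 0},
              ⨅ p : FDist Pol, AIR q V part η ρ.p p.p ν.1.p) ρ)) hc1
        obtain ⟨p, hp⟩ := iInf_lt_iff.mp h1
        rw [AirProof.AIR_eq hq _ _ hν fun i h => h, EReal.coe_lt_coe_iff] at hp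
        by_contra hcon
        push Not at hcon
        have : c' ≤ ∑ π, p.p π * (AirProof.Rg V ν π -
            η⁻¹ * AirProof.Hd q part ν π (pairMixObs q ν π)) := by
          calc c' = ∑ π, p.p π * c' := by rw [← Finset.sum_mul, p.sum_one, one_mul]
            _ ≤ _ := by
              refine Finset.sum_le_sum fun π _ => mul_le_mul_of_nonneg_left ?_ (p.nonneg π)
              refine (hcon π).le.trans ?_
              have := mul_le_mul_of_nonneg_left (AirProof.Hd_min hq
                (AirProof.mix_nonneg hq μ' π) (hfull π) (AirProof.sum_mix hq μ' π) hν)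
                (inv_nonneg.mpr hη.le)
              linarith
        exact absurd hp (not_lt.mpr this))
    refine iInf_le_of_le p ?_
    refine iSup_le fun i => iSup_le fun ν => ?_
    refine (AirProof.DT_le hq hη p ν.1 μ μ' δ hμ').trans ?_
    rw [EReal.coe_le_coe_iff]
    have h1 := hp ν.1.p (AirProof.conc_mem ν.2)
    simp only [fun π => AirProof.Hd_conc (q := q) ν.2 π (mixObs q μ'.p π)] at h1
    have h2 : η⁻¹ * δ = c - c' := by
      rw [hδ]; field_simp
    rw [h2]
    linarith
end
end

section
/- For every η > 0, DEC^KL_η(𝓜, Φ) ≤ DEC^KL_η(𝓜̄(Φ)) + C(Φ). Consequently, if C(Φ) ≤ 0, then max_{ρ∈Δ(Φ)} max_{ν∈Δ(Ψ)} min_{p∈Δ(Π)} AIR^Φ_{ρ,η}(p,ν) ≤ DEC^KL_η(𝓜̄(Φ)). -/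
open scoped BigOperators

noncomputable section

/-- Real-valued KL sum. -/
def klr {X : Type*} [Fintype X] (p q : X → ℝ) : ℝ := ∑ x, p x * Real.log (p x / q x)

theorem KL_of_ac {X : Type*} [Fintype X] {p q : X → ℝ} (h : ∀ x, q x = 0 → p x = 0) :
    KL p q = ((klr p q : ℝ) : EReal) := by
  unfold KL klr
  rw [if_pos h]

theorem KL_of_not_ac {X : Type*} [Fintype X] {p q : X → ℝ} (h : ¬ ∀ x, q x = 0 → p x = 0) :
    KL p q = ⊤ := by
  unfold KL
  rw [if_neg h]

theorem klr_nonneg {X : Type*} [Fintype X] {p q : X → ℝ} (hp : ∀ x, 0 ≤ p x)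
    (hq : ∀ x, 0 ≤ q x) (hpq : ∑ x, q x ≤ ∑ x, p x) (h : ∀ x, q x = 0 → p x = 0) :
    0 ≤ klr p q := by
  have key : ∀ x, p x - q x ≤ p x * Real.log (p x / q x) := by
    intro x
    rcases (hp x).eq_or_lt with h0 | h0
    · rw [← h0]; simp; exact hq x
    · have hq0 : 0 < q x := lt_of_le_of_ne (hq x) (fun h1 => h0.ne' (h x h1.symm))
      have h2 := Real.log_le_sub_one_of_pos (div_pos hq0 h0)
      have h3 : Real.log (p x / q x) = - Real.log (q x / p x) := by
        rw [← Real.log_inv, inv_div]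
      rw [h3]
      have h4 : p x * Real.log (q x / p x) ≤ p x * (q x / p x - 1) :=
        mul_le_mul_of_nonneg_left h2 h0.le
      have h5 : p x * (q x / p x - 1) = q x - p x := by field_simp
      linarith
  have := Finset.sum_le_sum (fun x (_ : x ∈ Finset.univ) => key x)
  rw [Finset.sum_sub_distrib] at this
  unfold klr
  linarith

theorem KL_nonneg' {X : Type*} [Fintype X] {p q : X → ℝ} (hp : ∀ x, 0 ≤ p x)
    (hq : ∀ x, 0 ≤ q x) (hpq : ∑ x, q x ≤ ∑ x, p x) : 0 ≤ KL p q := by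
  by_cases h : ∀ x, q x = 0 → p x = 0
  · rw [KL_of_ac h]; exact_mod_cast klr_nonneg hp hq hpq h
  · rw [KL_of_not_ac h]; exact le_top

theorem coe_sum_EReal {X : Type*} (s : Finset X) (f : X → ℝ) :
    ((∑ x ∈ s, f x : ℝ) : EReal) = ∑ x ∈ s, ((f x : ℝ) : EReal) := by
  classical
  induction s using Finset.induction_on with
  | empty => simp
  | insert a s ha ih => rw [Finset.sum_insert ha, Finset.sum_insert ha, EReal.coe_add, ih]

theorem sum_KL_of_ac {P X : Type*} [Fintype P] [Fintype X] {p : P → ℝ} {A B : P → X → ℝ}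
    (h : ∀ π x, B π x = 0 → A π x = 0) :
    ∑ π, ((p π : ℝ) : EReal) * KL (A π) (B π) = ((∑ π, p π * klr (A π) (B π) : ℝ) : EReal) := by
  rw [coe_sum_EReal]
  refine Finset.sum_congr rfl fun π _ => ?_
  rw [KL_of_ac (h π), EReal.coe_mul]

theorem exists_ge_of_avg {κ : Type*} [Fintype κ] (w t : κ → ℝ) (hw : ∀ k, 0 ≤ w k)
    (hw1 : ∑ k, w k = 1) (c : ℝ) (hc : c ≤ ∑ k, w k * t k) : ∃ k, 0 < w k ∧ c ≤ t k := by
  by_contra hcon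
  push Not at hcon
  have hle : ∀ k, w k * t k ≤ w k * c := by
    intro k
    rcases (hw k).eq_or_lt with h | h
    · simp [← h]
    · exact mul_le_mul_of_nonneg_left (hcon k h).le h.le
  obtain ⟨k0, hk0⟩ : ∃ k, 0 < w k := by
    by_contra h
    push Not at h
    have : ∑ k, w k ≤ 0 := Finset.sum_nonpos fun k _ => h k
    linarith
  have hlt : ∑ k, w k * t k < ∑ k, w k * c :=
    Finset.sum_lt_sum (fun k _ => hle k)
      ⟨k0, Finset.mem_univ _, mul_lt_mul_of_pos_left (hcon k0 hk0) hk0⟩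
  rw [← Finset.sum_mul, hw1, one_mul] at hlt
  linarith

/-- Mixture is the best reference measure. -/
theorem mix_klr_le {κ X : Type*} [Fintype κ] [Fintype X] (w : κ → ℝ) (hw : ∀ k, 0 ≤ w k)
    (hw1 : ∑ k, w k = 1)
    (P : κ → X → ℝ) (hP : ∀ k x, 0 ≤ P k x) (hP1 : ∀ k, ∑ x, P k x = 1)
    (Q : X → ℝ) (hQ : ∀ x, 0 ≤ Q x) (hQ1 : ∑ x, Q x = 1)
    (hac : ∀ k x, Q x = 0 → P k x = 0) :
    ∑ k, w k * klr (P k) (fun x => ∑ j, w j * P j x) ≤ ∑ k, w k * klr (P k) Q := by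
  set R : X → ℝ := fun x => ∑ j, w j * P j x with hR
  have hR0 : ∀ x, 0 ≤ R x := fun x => Finset.sum_nonneg fun j _ => mul_nonneg (hw j) (hP j x)
  have hR1 : ∑ x, R x = 1 := by
    simp only [hR]
    rw [Finset.sum_comm]
    simp_rw [← Finset.mul_sum, hP1, mul_one, hw1]
  have hRQ : ∀ x, Q x = 0 → R x = 0 := fun x hx => by
    simp [hR, hac _ x hx]
  have h1 := klr_nonneg hR0 hQ (by rw [hR1, hQ1]) hRQ
  have h2 : klr R Q = ∑ k, w k * ∑ x, P k x * Real.log (R x / Q x) := by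
    unfold klr
    simp_rw [Finset.mul_sum]
    rw [Finset.sum_comm]
    refine Finset.sum_congr rfl fun x _ => ?_
    simp_rw [← mul_assoc]
    rw [← Finset.sum_mul]
  have h3 : ∑ k, w k * klr (P k) Q = ∑ k, w k * klr (P k) R + klr R Q := by
    rw [h2, ← Finset.sum_add_distrib]
    refine Finset.sum_congr rfl fun k _ => ?_
    rw [← mul_add]
    unfold klr
    rw [← Finset.sum_add_distrib]
    rcases (hw k).eq_or_lt with h | h
    · simp [← h]
    congr 1
    refine Finset.sum_congr rfl fun x _ => ?_
    rcases (hP k x).eq_or_lt with h0 | h0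
    · simp [← h0]
    have hRx : 0 < R x := lt_of_lt_of_le (mul_pos h h0)
      (Finset.single_le_sum (f := fun j => w j * P j x)
        (fun j _ => mul_nonneg (hw j) (hP j x)) (Finset.mem_univ k))
    have hQx : Q x ≠ 0 := fun hx => h0.ne' (hac k x hx)
    rw [← mul_add, ← Real.log_mul (by positivity) (by positivity)]
    congr 2
    field_simp
  linarith

/-- Minimax step, through separation of convex sets. -/
theorem minimax_step {Pol ι : Type*} [Fintype Pol] [Nonempty Pol] (v : ι → Pol → ℝ)
    (hv : ∀ k π, v k π ≤ 1) (c' c : ℝ) (hcc : c' < c)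
    (H : ∀ p : FDist Pol, (∀ π, 0 < p.p π) → ∃ k, c < ∑ π, p.p π * v k π) :
    ∃ (κ : Type) (_ : Fintype κ) (w : κ → ℝ) (z : κ → ι), (∀ k, 0 ≤ w k) ∧ ∑ k, w k = 1 ∧
      ∀ π, c' ≤ ∑ k, w k * v (z k) π := by
  classical
  by_cases hdis : Disjoint (Set.pi Set.univ fun _ : Pol => Set.Ioi c')
      (convexHull ℝ (Set.range v))
  · exfalso
    obtain ⟨f, u, hf1, hf2⟩ := geometric_hahn_banach_open
      (convex_pi fun _ _ => convex_Ioi c')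
      (isOpen_set_pi Set.finite_univ fun _ _ => isOpen_Ioi) (convex_convexHull ℝ _) hdis
    -- coefficients
    set a : Pol → ℝ := fun π => - f (Pi.single π 1) with ha
    have hfa : ∀ x : Pol → ℝ, f x = - ∑ π, a π * x π := by
      intro x
      conv_lhs => rw [pi_eq_sum_univ' x]
      simp [map_sum, ha, mul_comm]
    have hmem : ∀ x : Pol → ℝ, (∀ π, c' < x π) → - ∑ π, a π * x π < u := by
      intro x hx
      rw [← hfa]
      exact hf1 x fun π _ => hx π
    have ha0 : ∀ π, 0 ≤ a π := by
      intro π0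
      by_contra hneg
      push Not at hneg
      -- go far in direction π0
      set B : ℝ := - ∑ π, a π * (c' + 1) with hB
      set t : ℝ := max 0 ((u - B) / (- a π0)) with ht
      have h := hmem (fun π => (c' + 1) + if π = π0 then t else 0) (by
        intro π
        have : 0 ≤ t := le_max_left _ _
        split_ifs <;> linarith)
      have h' : ∑ π, a π * ((c' + 1) + if π = π0 then t else 0)
          = ∑ π, a π * (c' + 1) + a π0 * t := by
        simp_rw [mul_add]
        rw [Finset.sum_add_distrib]
        simp [← Finset.sum_add_distrib, mul_add]
      rw [h'] at h
      have h2 : (u - B) / (- a π0) ≤ t := le_max_right _ _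
      rw [div_le_iff₀ (by linarith)] at h2
      linarith
    have hlim : - ∑ π, a π * c' ≤ u := by
      by_contra hcon
      push Not at hcon
      set A : ℝ := ∑ π, a π with hA
      have hA0 : 0 ≤ A := Finset.sum_nonneg fun π _ => ha0 π
      rw [← Finset.sum_mul] at hcon
      set e : ℝ := (- (A * c') - u) / (A + 1) with he
      have he0 : 0 < e := div_pos (by linarith) (by linarith)
      have h := hmem (fun _ => c' + e) (fun _ => by linarith)
      rw [← Finset.sum_mul] at h
      have : e * (A + 1) = - (A * c') - u := by
        rw [he]; field_simp
      nlinarith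
    have hk : ∀ k, ∑ π, a π * v k π ≤ ∑ π, a π * c' := by
      intro k
      have h := hf2 (v k) (subset_convexHull ℝ _ ⟨k, rfl⟩)
      rw [hfa] at h
      linarith
    have hApos : 0 < ∑ π, a π := by
      refine lt_of_le_of_ne (Finset.sum_nonneg fun π _ => ha0 π) fun h0 => ?_
      have hz : ∀ π, a π = 0 := fun π =>
        (Finset.sum_eq_zero_iff_of_nonneg (fun π _ => ha0 π)).1 h0.symm π (Finset.mem_univ _)
      have h1 := hmem (fun _ => c' + 1) (fun _ => by linarith)
      obtain ⟨k, -⟩ := H ⟨fun _ => (Fintype.card Pol : ℝ)⁻¹, fun _ => by positivity, by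
        simp⟩ (fun _ => by
          have : 0 < Fintype.card Pol := Fintype.card_pos
          positivity)
      have h2 := hf2 (v k) (subset_convexHull ℝ _ ⟨k, rfl⟩)
      rw [hfa] at h2
      simp [hz] at h1 h2
      linarith
    set A : ℝ := ∑ π, a π with hA
    set N : ℝ := (Fintype.card Pol : ℝ) with hN
    have hN0 : 0 < N := by
      have : 0 < Fintype.card Pol := Fintype.card_pos
      positivity
    set δ : ℝ := (c - c') / (|1 - c'| + 1 + (c - c')) with hδ
    have habs : 0 ≤ |1 - c'| := abs_nonneg _
    have hden : 0 < |1 - c'| + 1 + (c - c') := by linarith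
    have hδ0 : 0 < δ := div_pos (by linarith) hden
    have hδ1 : δ ≤ 1 := by
      rw [hδ, div_le_one hden]; linarith
    have hδe : δ * (|1 - c'| + 1 + (c - c')) = c - c' := by
      rw [hδ]; field_simp
    obtain ⟨k, hkc⟩ := H ⟨fun π => (1 - δ) * (a π / A) + δ * N⁻¹, fun π => by
        have := ha0 π
        have h1 : 0 ≤ 1 - δ := by linarith
        positivity, by
        rw [Finset.sum_add_distrib, ← Finset.mul_sum, ← Finset.sum_div, ← hA,
          div_self hApos.ne']
        simp [← hN]
        field_simp
        ring⟩ (fun π => by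
          have := ha0 π
          have h1 : 0 ≤ 1 - δ := by linarith
          have h2 : 0 < δ * N⁻¹ := by positivity
          have h3 : 0 ≤ (1 - δ) * (a π / A) := by positivity
          show 0 < (1 - δ) * (a π / A) + δ * N⁻¹
          linarith)
    have e1 : ∑ π, ((1 - δ) * (a π / A) + δ * N⁻¹) * v k π
        = (1 - δ) / A * (∑ π, a π * v k π) + δ * N⁻¹ * ∑ π, v k π := by
      rw [Finset.mul_sum, Finset.mul_sum, ← Finset.sum_add_distrib]
      refine Finset.sum_congr rfl fun π _ => ?_
      ring
    have e2 : ∑ π, v k π ≤ N := by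
      have := Finset.sum_le_sum (fun π (_ : π ∈ Finset.univ) => hv k π)
      simpa using this
    have e3 : δ * N⁻¹ * ∑ π, v k π ≤ δ := by
      calc δ * N⁻¹ * ∑ π, v k π ≤ δ * N⁻¹ * N :=
            mul_le_mul_of_nonneg_left e2 (by positivity)
        _ = δ := by field_simp
    have e4 : (1 - δ) / A * (∑ π, a π * v k π) ≤ (1 - δ) * c' := by
      have h1 : 0 ≤ (1 - δ) / A := div_nonneg (by linarith) hApos.le
      calc (1 - δ) / A * (∑ π, a π * v k π) ≤ (1 - δ) / A * (∑ π, a π * c') :=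
            mul_le_mul_of_nonneg_left (hk k) h1
        _ = (1 - δ) * c' := by
            rw [← Finset.sum_mul, ← hA]; field_simp
    have hkc' : c < ∑ π, ((1 - δ) * (a π / A) + δ * N⁻¹) * v k π := hkc
    rw [e1] at hkc'
    have e5 : δ * (1 - c') ≤ δ * |1 - c'| := mul_le_mul_of_nonneg_left (le_abs_self _) hδ0.le
    have e6 : 0 < δ * (c - c') := mul_pos hδ0 (by linarith)
    nlinarith
  · rw [Set.not_disjoint_iff] at hdis
    obtain ⟨x, hx1, hx2⟩ := hdis
    rw [convexHull_range_eq_exists_affineCombination] at hx2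
    obtain ⟨s, w, hw, hw1, hx⟩ := hx2
    rw [Finset.affineCombination_eq_linear_combination _ _ _ hw1] at hx
    let e := s.equivFin
    refine ⟨Fin s.card, inferInstance, fun k => w (e.symm k).1, fun k => (e.symm k).1,
      fun k => hw _ (e.symm k).2, ?_, fun π => ?_⟩
    · rw [e.symm.sum_comp (fun y : s => w y.1), Finset.sum_coe_sort s w, hw1]
    · rw [e.symm.sum_comp (fun y : s => w y.1 * v y.1 π),
        Finset.sum_coe_sort s (fun y => w y * v y π)]
      have h1 : c' < x π := hx1 π (Set.mem_univ _)
      rw [← hx] at h1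
      simpa using h1.le

section Aux
variable {Pol Obs Mod I : Type*}
variable [Fintype Pol] [Fintype Obs] [Fintype Mod] [Fintype I] [DecidableEq I]

theorem mixObs_nonneg {q : Mod → Pol → Obs → ℝ}
    (hq : ∀ m π, (∀ o, 0 ≤ q m π o) ∧ ∑ o, q m π o = 1) (μ : FDist Mod) (π : Pol) (o : Obs) :
    0 ≤ mixObs q μ.p π o :=
  Finset.sum_nonneg fun m _ => mul_nonneg (μ.nonneg m) ((hq m π).1 o)

theorem mixObs_sum {q : Mod → Pol → Obs → ℝ}
    (hq : ∀ m π, (∀ o, 0 ≤ q m π o) ∧ ∑ o, q m π o = 1) (μ : FDist Mod) (π : Pol) :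
    ∑ o, mixObs q μ.p π o = 1 := by
  unfold mixObs
  rw [Finset.sum_comm]
  simp_rw [← Finset.mul_sum, (hq _ π).2, mul_one, μ.sum_one]

/-- Model marginal. -/
def marg (ν : FDist (Mod × Pol)) : FDist Mod where
  p m := ∑ π, ν.p (m, π)
  nonneg m := Finset.sum_nonneg fun π _ => ν.nonneg _
  sum_one := by rw [← Fintype.sum_prod_type, ν.sum_one]

theorem marg_sum (ν : FDist (Mod × Pol)) (f : Mod → ℝ) :
    ∑ m, (marg ν).p m * f m = ∑ mp : Mod × Pol, ν.p mp * f mp.1 := by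
  rw [Fintype.sum_prod_type]
  simp [marg, Finset.sum_mul]

theorem marg_obs (q : Mod → Pol → Obs → ℝ) (ν : FDist (Mod × Pol)) (π : Pol) :
    pairMixObs q ν.p π = mixObs q (marg ν).p π := by
  funext o
  exact (marg_sum ν fun m => q m π o).symm

theorem marg_supp (ν : FDist (Mod × Pol)) (m : Mod) (h : (marg ν).p m ≠ 0) :
    ∃ π, ν.p (m, π) ≠ 0 := by
  by_contra hcon
  push Not at hcon
  exact h (by simp [marg, hcon])

theorem avg_mem {X : Type*} [Fintype X] (μ : FDist X) (f : X → ℝ) (hf : ∀ x, f x ∈ Set.Icc (0:ℝ) 1) :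
    ∑ x, μ.p x * f x ∈ Set.Icc (0:ℝ) 1 := by
  constructor
  · exact Finset.sum_nonneg fun x _ => mul_nonneg (μ.nonneg x) (hf x).1
  · calc ∑ x, μ.p x * f x ≤ ∑ x, μ.p x * 1 :=
        Finset.sum_le_sum fun x _ => mul_le_mul_of_nonneg_left (hf x).2 (μ.nonneg x)
      _ = 1 := by simp [μ.sum_one]

theorem le_CPhi [Nonempty Pol] {V : Mod → Pol → ℝ} (hV : ∀ m π, V m π ∈ Set.Icc (0 : ℝ) 1)
    (part : Mod × Pol → Option I) (i : I) (ν : FDist (Mod × Pol))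
    (hν : ∀ mp, ν.p mp ≠ 0 → part mp = some i) :
    (∑ mp : Mod × Pol, ν.p mp * V mp.1 mp.2)
      - (⨆ π : Pol, ∑ mp : Mod × Pol, ν.p mp * V mp.1 π) ≤ CPhi V part := by
  have hb : ∀ ν : FDist (Mod × Pol), (∑ mp : Mod × Pol, ν.p mp * V mp.1 mp.2)
      - (⨆ π : Pol, ∑ mp : Mod × Pol, ν.p mp * V mp.1 π) ≤ 1 := by
    intro ν
    have h1 := (avg_mem ν (fun mp => V mp.1 mp.2) fun mp => hV _ _).2
    have h2 : 0 ≤ ⨆ π : Pol, ∑ mp : Mod × Pol, ν.p mp * V mp.1 π :=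
      Real.iSup_nonneg fun π => (avg_mem ν (fun mp => V mp.1 π) fun mp => hV _ _).1
    linarith
  unfold CPhi
  refine le_trans ?_ (le_ciSup (f := fun i : I =>
    ⨆ ν : {ν : FDist (Mod × Pol) // ∀ mp, ν.p mp ≠ 0 → part mp = some i},
    ((∑ mp : Mod × Pol, ν.1.p mp * V mp.1 mp.2)
      - ⨆ π : Pol, ∑ mp : Mod × Pol, ν.1.p mp * V mp.1 π)) ?_ i)
  · exact le_ciSup (f := fun ν : {ν : FDist (Mod × Pol) // ∀ mp, ν.p mp ≠ 0 → part mp = some i} =>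
      ((∑ mp : Mod × Pol, ν.1.p mp * V mp.1 mp.2)
      - ⨆ π : Pol, ∑ mp : Mod × Pol, ν.1.p mp * V mp.1 π))
      ⟨1, by rintro _ ⟨ν, rfl⟩; exact hb ν.1⟩ ⟨ν, hν⟩
  · exact Set.Finite.bddAbove (Set.finite_range _)

/-- Mixture of distributions. -/
def mixD {κ : Type*} [Fintype κ] (w : κ → ℝ) (hw : ∀ k, 0 ≤ w k) (hw1 : ∑ k, w k = 1)
    (μ : κ → FDist Mod) : FDist Mod where
  p m := ∑ k, w k * (μ k).p m
  nonneg m := Finset.sum_nonneg fun k _ => mul_nonneg (hw k) ((μ k).nonneg m)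
  sum_one := by
    rw [Finset.sum_comm]
    simp_rw [← Finset.mul_sum, (μ _).sum_one, mul_one, hw1]

theorem mixD_obs {κ : Type*} [Fintype κ] (w : κ → ℝ) (hw : ∀ k, 0 ≤ w k) (hw1 : ∑ k, w k = 1)
    (μ : κ → FDist Mod) (q : Mod → Pol → Obs → ℝ) (π : Pol) :
    mixObs q (mixD w hw hw1 μ).p π = fun o => ∑ k, w k * mixObs q (μ k).p π o := by
  funext o
  simp only [mixObs, mixD, Finset.sum_mul, Finset.mul_sum]
  rw [Finset.sum_comm]
  simp_rw [mul_assoc]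

theorem part_one [Nonempty Pol]
    (q : Mod → Pol → Obs → ℝ)
    (hq : ∀ m π, (∀ o, 0 ≤ q m π o) ∧ ∑ o, q m π o = 1)
    (V : Mod → Pol → ℝ)
    (hV : ∀ m π, V m π ∈ Set.Icc (0 : ℝ) 1)
    (part : Mod × Pol → Option I)
    (η : ℝ) (hη : 0 < η) :
    DECPhi q V part η ≤ DECbar q V part η + ((CPhi V part : ℝ) : EReal) := by
  unfold DECPhi
  refine iSup_le fun μbar => ?_
  by_contra hcon
  rw [not_le] at hcon
  obtain ⟨c', hc'1, hc'2⟩ := EReal.lt_iff_exists_real_btwn.1 hcon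
  obtain ⟨c, hc1, hc2⟩ := EReal.lt_iff_exists_real_btwn.1 hc'2
  have hcc : c' < c := by exact_mod_cast hc1
  have hη' : 0 < η⁻¹ := inv_pos.2 hη
  set C := CPhi V part with hC
  let ι := {x : I × FDist Mod // (∀ m, x.2.p m ≠ 0 → ∃ π : Pol, part (m, π) = some x.1) ∧
    ∀ π o, mixObs q μbar.p π o = 0 → mixObs q x.2.p π o = 0}
  let reg : FDist Mod → Pol → ℝ := fun μ π =>
    (⨆ π' : Pol, ∑ m : Mod, μ.p m * V m π') - ∑ m : Mod, μ.p m * V m π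
  let v : ι → Pol → ℝ := fun x π =>
    reg x.1.2 π - η⁻¹ * klr (mixObs q x.1.2.p π) (mixObs q μbar.p π)
  have hv : ∀ x π, v x π ≤ 1 := by
    intro x π
    have h1 : (⨆ π' : Pol, ∑ m : Mod, x.1.2.p m * V m π') ≤ 1 :=
      ciSup_le fun π' => (avg_mem x.1.2 (fun m => V m π') fun m => hV _ _).2
    have h2 := (avg_mem x.1.2 (fun m => V m π) fun m => hV _ _).1
    have h3 := klr_nonneg (mixObs_nonneg hq x.1.2 π) (mixObs_nonneg hq μbar π)
      (by rw [mixObs_sum hq, mixObs_sum hq]) (x.2.2 π)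
    have h4 := mul_nonneg hη'.le h3
    simp only [v, reg]
    linarith
  obtain ⟨κ, hκ, w, z, hw, hw1, hz⟩ := minimax_step v hv (c' - C) (c - C) (by linarith) (by
    intro p hp
    have h := lt_of_lt_of_le hc2 (iInf_le _ p)
    obtain ⟨i, h⟩ := lt_iSup_iff.1 h
    obtain ⟨⟨ν, hν⟩, h⟩ := lt_iSup_iff.1 h
    simp only [marg_obs] at h
    have hac : ∀ π o, mixObs q μbar.p π o = 0 → mixObs q (marg ν).p π o = 0 := by
      by_contra hna
      push Not at hna
      obtain ⟨π, o, ho1, ho2⟩ := hna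
      have htop : ∑ π : Pol, ((p.p π : ℝ) : EReal) *
          KL (mixObs q (marg ν).p π) (mixObs q μbar.p π) = ⊤ := by
        rw [← top_le_iff]
        have hterm : ((p.p π : ℝ) : EReal) *
          KL (mixObs q (marg ν).p π) (mixObs q μbar.p π) = ⊤ := by
          rw [KL_of_not_ac (fun hh => ho2 (hh o ho1)), EReal.coe_mul_top_of_pos (hp π)]
        rw [← hterm]
        refine Finset.single_le_sum (f := fun π => ((p.p π : ℝ) : EReal) *
          KL (mixObs q (marg ν).p π) (mixObs q μbar.p π)) (fun π _ => ?_) (Finset.mem_univ π)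
        exact mul_nonneg (by exact_mod_cast (p.nonneg π))
          (KL_nonneg' (mixObs_nonneg hq _ π) (mixObs_nonneg hq μbar π)
            (by rw [mixObs_sum hq, mixObs_sum hq]))
      rw [htop, EReal.coe_mul_top_of_pos hη', EReal.sub_top] at h
      exact not_lt_bot h
    refine ⟨⟨(i, marg ν), ⟨fun m hm => ?_, hac⟩⟩, ?_⟩
    · obtain ⟨π, hπ⟩ := marg_supp ν m hm
      exact ⟨π, hν _ hπ⟩
    · rw [sum_KL_of_ac hac, ← EReal.coe_mul, ← EReal.coe_sub, EReal.coe_lt_coe_iff] at h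
      have hle := le_CPhi hV part i ν hν
      have hms : ∀ π, ∑ mp : Mod × Pol, ν.p mp * V mp.1 π = ∑ m, (marg ν).p m * V m π :=
        fun π => (marg_sum ν (fun m => V m π)).symm
      simp_rw [hms] at hle h
      have e1 : ∑ π, p.p π * v ⟨(i, marg ν), ⟨fun m hm => (marg_supp ν m hm).imp
            fun π hπ => hν _ hπ, hac⟩⟩ π
          = (∑ π, p.p π * reg (marg ν) π)
            - η⁻¹ * ∑ π, p.p π * klr (mixObs q (marg ν).p π) (mixObs q μbar.p π) := by
        rw [Finset.mul_sum, ← Finset.sum_sub_distrib]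
        refine Finset.sum_congr rfl fun π _ => ?_
        simp only [v]
        ring
      rw [e1]
      have e2 : ∑ π, p.p π * ((∑ mp : Mod × Pol, ν.p mp * V mp.1 mp.2)
          - ∑ m, (marg ν).p m * V m π) ≤ ∑ π, (p.p π * reg (marg ν) π + p.p π * C) := by
        refine Finset.sum_le_sum fun π _ => ?_
        rw [← mul_add]
        refine mul_le_mul_of_nonneg_left ?_ (p.nonneg π)
        simp only [reg]
        linarith
      rw [Finset.sum_add_distrib, ← Finset.sum_mul, p.sum_one, one_mul] at e2
      linarith)
  let μh : FDist Mod := mixD w hw hw1 fun k => (z k).1.2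
  have hμh : ∀ m, μh.p m ≠ 0 → ∃ i : I, ∃ π : Pol, part (m, π) = some i := by
    intro m hm
    obtain ⟨k, -, hk⟩ := Finset.exists_ne_zero_of_sum_ne_zero hm
    exact ⟨_, (z k).2.1 m (right_ne_zero_of_mul hk)⟩
  have hmain : ((c' - C : ℝ) : EReal) ≤ DECbar q V part η := by
    unfold DECbar
    refine le_trans ?_ (le_iSup _ (⟨μh, hμh⟩ : {μ : FDist Mod //
      ∀ m, μ.p m ≠ 0 → ∃ i : I, ∃ π : Pol, part (m, π) = some i}))
    refine le_iInf fun p => ?_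
    obtain ⟨k, hk0, hk⟩ := exists_ge_of_avg w (fun k => ∑ π, p.p π * (reg (z k).1.2 π
      - η⁻¹ * klr (mixObs q (z k).1.2.p π) (mixObs q μh.p π))) hw hw1 (c' - C) (by
        have h1 : ∀ π, c' - C ≤ ∑ k, w k * (reg (z k).1.2 π
            - η⁻¹ * klr (mixObs q (z k).1.2.p π) (mixObs q μh.p π)) := by
          intro π
          refine (hz π).trans ?_
          have h2 := mix_klr_le w hw hw1 (fun k => mixObs q (z k).1.2.p π)
            (fun k o => mixObs_nonneg hq _ π o) (fun k => mixObs_sum hq _ π)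
            (mixObs q μbar.p π) (mixObs_nonneg hq _ π) (mixObs_sum hq _ π)
            (fun k o ho => (z k).2.2 π o ho)
          rw [← mixD_obs w hw hw1 (fun k => (z k).1.2) q π] at h2
          have h3 := mul_le_mul_of_nonneg_left h2 hη'.le
          simp only [v, mul_sub, Finset.sum_sub_distrib]
          rw [Finset.mul_sum, Finset.mul_sum] at h3
          simp_rw [mul_left_comm (w _) η⁻¹]
          simp only [μh]
          linarith
        calc c' - C = ∑ π, p.p π * (c' - C) := by rw [← Finset.sum_mul, p.sum_one, one_mul]
          _ ≤ ∑ π, p.p π * ∑ k, w k * (reg (z k).1.2 π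
            - η⁻¹ * klr (mixObs q (z k).1.2.p π) (mixObs q μh.p π)) :=
              Finset.sum_le_sum fun π _ => mul_le_mul_of_nonneg_left (h1 π) (p.nonneg π)
          _ = _ := by
            simp_rw [Finset.mul_sum]
            rw [Finset.sum_comm]
            refine Finset.sum_congr rfl fun k _ => Finset.sum_congr rfl fun π _ => ?_
            ring)
    refine le_trans ?_ (le_iSup _ (z k).1.1)
    refine le_trans ?_ (le_iSup _ (⟨(z k).1.2, (z k).2.1⟩ : {μ : FDist Mod //
      ∀ m, μ.p m ≠ 0 → ∃ π : Pol, part (m, π) = some (z k).1.1}))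
    have hac : ∀ π o, mixObs q μh.p π o = 0 → mixObs q (z k).1.2.p π o = 0 := by
      intro π o ho
      simp only [μh] at ho
      rw [mixD_obs] at ho
      have h := (Finset.sum_eq_zero_iff_of_nonneg
        (fun k _ => mul_nonneg (hw k) (mixObs_nonneg hq _ π o))).1 ho k (Finset.mem_univ _)
      exact (mul_eq_zero.1 h).resolve_left hk0.ne'
    rw [sum_KL_of_ac hac, ← EReal.coe_mul, ← EReal.coe_sub, EReal.coe_le_coe_iff]
    refine hk.trans (le_of_eq ?_)
    rw [Finset.mul_sum, ← Finset.sum_sub_distrib]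
    refine Finset.sum_congr rfl fun π _ => ?_
    simp only [reg]
    ring
  have hfin : (c' : EReal) ≤ DECbar q V part η + (C : EReal) := by
    have := add_le_add_left hmain (C : EReal)
    rw [← EReal.coe_add] at this
    simpa using this
  exact absurd hc'1 (not_lt.2 hfin)


theorem part_two
    (q : Mod → Pol → Obs → ℝ)
    (hq : ∀ m π, (∀ o, 0 ≤ q m π o) ∧ ∑ o, q m π o = 1)
    (V : Mod → Pol → ℝ)
    (part : Mod × Pol → Option I)
    (η : ℝ) (hη : 0 < η) :
    AIRmaxmin q V part η ≤ DECPhi q V part η := by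
  have hη' : 0 < η⁻¹ := inv_pos.2 hη
  unfold AIRmaxmin
  refine iSup_le fun ρ => iSup_le fun ⟨ν, hν⟩ => ?_
  unfold DECPhi
  refine le_trans ?_ (le_iSup _ (marg ν))
  refine le_iInf fun p => (iInf_le _ p).trans ?_
  let w : I → ℝ := fun i => ∑ mp, if part mp = some i then ν.p mp else 0
  let J : Pol → I → Obs → ℝ := fun π i o =>
    ∑ mp : Mod × Pol, if part mp = some i then ν.p mp * q mp.1 π o else 0
  let Z : Pol → Obs → ℝ := fun π o => ∑ mp : Mod × Pol, ν.p mp * q mp.1 π o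
  have hνq : ∀ π o (mp : Mod × Pol), 0 ≤ ν.p mp * q mp.1 π o := fun π o mp =>
    mul_nonneg (ν.nonneg _) ((hq _ _).1 o)
  have hw : ∀ i, 0 ≤ w i := fun i => Finset.sum_nonneg fun mp _ => by
    split_ifs
    · exact ν.nonneg _
    · exact le_rfl
  have hJ0 : ∀ π i o, 0 ≤ J π i o := fun π i o => Finset.sum_nonneg fun mp _ => by
    split_ifs
    · exact hνq π o mp
    · exact le_rfl
  have hZ0 : ∀ π o, 0 ≤ Z π o := fun π o => Finset.sum_nonneg fun mp _ => hνq π o mp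
  have hsel : ∀ (f : Mod × Pol → ℝ) (mp : Mod × Pol),
      ∑ i : I, (if part mp = some i then ν.p mp * f mp else 0) = ν.p mp * f mp := by
    intro f mp
    rcases hpm : part mp with _ | j
    · simp [hν mp hpm]
    · simp
  have hw1 : ∑ i, w i = 1 := by
    simp only [w]
    rw [Finset.sum_comm, ← ν.sum_one]
    refine Finset.sum_congr rfl fun mp _ => ?_
    simpa using hsel (fun _ => 1) mp
  have hJZ : ∀ π o, ∑ i, J π i o = Z π o := by
    intro π o
    simp only [J, Z]
    rw [Finset.sum_comm]
    exact Finset.sum_congr rfl fun mp _ => hsel (fun mp => q mp.1 π o) mp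
  have hJw : ∀ π i, ∑ o, J π i o = w i := by
    intro π i
    simp only [J, w]
    rw [Finset.sum_comm]
    refine Finset.sum_congr rfl fun mp _ => ?_
    split_ifs
    · rw [← Finset.mul_sum, (hq _ _).2, mul_one]
    · simp
  have hJleZ : ∀ π i o, J π i o ≤ Z π o := fun π i o => by
    rw [← hJZ]
    exact Finset.single_le_sum (f := fun i => J π i o) (fun i _ => hJ0 π i o) (Finset.mem_univ i)
  have hJlew : ∀ π i o, J π i o ≤ w i := fun π i o => by
    rw [← hJw π i]
    exact Finset.single_le_sum (f := fun o => J π i o) (fun o _ => hJ0 π i o) (Finset.mem_univ o)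
  have hpost : ∀ π o i, post q part ν.p π o i = J π i o / Z π o := fun _ _ _ => rfl
  by_cases hac : ∀ i, ρ.p i = 0 → w i = 0
  · -- the absolutely continuous case
    let νc : I → Mod × Pol → ℝ := fun i mp => (if part mp = some i then ν.p mp else 0) / w i
    have hwνc : ∀ i mp, w i * νc i mp = if part mp = some i then ν.p mp else 0 := by
      intro i mp
      simp only [νc]
      by_cases h0 : w i = 0
      · have h := (Finset.sum_eq_zero_iff_of_nonneg (fun mp _ => by
          split_ifs
          · exact ν.nonneg _
          · exact le_rfl)).1 h0 mp (Finset.mem_univ _)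
        rw [h0, h]; simp
      · field_simp
    have hexp : ∀ f : Mod × Pol → ℝ,
        ∑ i, w i * ∑ mp, νc i mp * f mp = ∑ mp, ν.p mp * f mp := by
      intro f
      simp_rw [Finset.mul_sum]
      rw [Finset.sum_comm]
      refine Finset.sum_congr rfl fun mp _ => ?_
      simp_rw [← mul_assoc, hwνc, ite_mul, zero_mul]
      exact hsel f mp
    have hPc : ∀ i π o, pairMixObs q (νc i) π o = J π i o / w i := by
      intro i π o
      simp only [pairMixObs, νc, J, Finset.sum_div]
      refine Finset.sum_congr rfl fun mp _ => ?_
      split_ifs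
      · ring
      · simp
    have hZm : ∀ π, mixObs q (marg ν).p π = Z π := fun π => (marg_obs q ν π).symm
    have hacpost : ∀ π o i, ρ.p i = 0 → post q part ν.p π o i = 0 := by
      intro π o i hi
      have h1 := hJlew π i o
      rw [hac i hi] at h1
      rw [hpost, le_antisymm h1 (hJ0 π i o), zero_div]
    have hklpi : ∀ π, ∑ i, w i * klr (pairMixObs q (νc i) π) (Z π)
        ≤ ∑ o, Z π o * klr (post q part ν.p π o) ρ.p := by
      intro π
      have h0 := klr_nonneg hw ρ.nonneg (by rw [hw1, ρ.sum_one]) hac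
      have h1 : ∑ o, Z π o * klr (post q part ν.p π o) ρ.p
          = ∑ i, w i * klr (pairMixObs q (νc i) π) (Z π) + klr w ρ.p := by
        unfold klr
        simp_rw [Finset.mul_sum]
        rw [Finset.sum_comm, ← Finset.sum_add_distrib]
        refine Finset.sum_congr rfl fun i _ => ?_
        conv_rhs => arg 2; rw [← hJw π i, Finset.sum_mul]
        rw [← Finset.sum_add_distrib]
        refine Finset.sum_congr rfl fun o _ => ?_
        rw [hpost, hPc, hJw π i]
        rcases (hJ0 π i o).eq_or_lt with h | h
        · simp [← h]
        have hZp : 0 < Z π o := h.trans_le (hJleZ π i o)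
        have hwp : 0 < w i := h.trans_le (hJlew π i o)
        have hρp : ρ.p i ≠ 0 := fun hh => hwp.ne' (hac i hh)
        have e1 : Real.log (J π i o / Z π o / ρ.p i)
            = Real.log (J π i o / w i / Z π o) + Real.log (w i / ρ.p i) := by
          rw [← Real.log_mul (by positivity) (by positivity)]
          congr 1
          field_simp
        rw [e1]
        field_simp
      linarith
    let t : I → ℝ := fun i =>
      (∑ π : Pol, p.p π * ((∑ mp : Mod × Pol, νc i mp * V mp.1 mp.2)
            - (∑ mp : Mod × Pol, νc i mp * V mp.1 π)))
        - η⁻¹ * ∑ π : Pol, p.p π * klr (pairMixObs q (νc i) π) (Z π)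
    let A : ℝ := (∑ π : Pol, ∑ mp : Mod × Pol, p.p π * ν.p mp * (V mp.1 mp.2 - V mp.1 π))
      - η⁻¹ * ∑ π : Pol, ∑ mp : Mod × Pol, ∑ o : Obs,
          (p.p π * ν.p mp * q mp.1 π o) * klr (post q part ν.p π o) ρ.p
    have hAIR : AIR q V part η ρ.p p.p ν.p = (A : EReal) := by
      simp only [A]
      unfold AIR
      rw [EReal.coe_sub, EReal.coe_mul, coe_sum_EReal (f := fun π => ∑ mp : Mod × Pol, ∑ o : Obs,
          (p.p π * ν.p mp * q mp.1 π o) * klr (post q part ν.p π o) ρ.p)]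
      simp_rw [KL_of_ac (hacpost _ _)]
      congr 2
      refine Finset.sum_congr rfl fun π _ => ?_
      rw [coe_sum_EReal]
      refine Finset.sum_congr rfl fun mp _ => ?_
      rw [coe_sum_EReal]
      refine Finset.sum_congr rfl fun o _ => ?_
      rw [← EReal.coe_mul]
    have hAt : A ≤ ∑ i, w i * t i := by
      have e1 : ∑ i, w i * (∑ π : Pol, p.p π * ((∑ mp : Mod × Pol, νc i mp * V mp.1 mp.2)
            - (∑ mp : Mod × Pol, νc i mp * V mp.1 π)))
          = ∑ π : Pol, ∑ mp : Mod × Pol, p.p π * ν.p mp * (V mp.1 mp.2 - V mp.1 π) := by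
        simp_rw [Finset.mul_sum (s := (Finset.univ : Finset Pol))]
        rw [Finset.sum_comm]
        refine Finset.sum_congr rfl fun π _ => ?_
        have h := hexp (fun mp => V mp.1 mp.2 - V mp.1 π)
        simp_rw [mul_assoc]
        rw [← Finset.mul_sum, ← h, Finset.mul_sum]
        refine Finset.sum_congr rfl fun i _ => ?_
        rw [← Finset.sum_sub_distrib]
        simp_rw [← mul_sub]
        ring
      have e2 : ∑ i, w i * (∑ π : Pol, p.p π * klr (pairMixObs q (νc i) π) (Z π))
          ≤ ∑ π : Pol, ∑ mp : Mod × Pol, ∑ o : Obs,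
          (p.p π * ν.p mp * q mp.1 π o) * klr (post q part ν.p π o) ρ.p := by
        simp_rw [Finset.mul_sum]
        rw [Finset.sum_comm]
        refine Finset.sum_le_sum fun π _ => ?_
        have h := mul_le_mul_of_nonneg_left (hklpi π) (p.nonneg π)
        rw [Finset.mul_sum, Finset.mul_sum] at h
        rw [Finset.sum_comm (s := (Finset.univ : Finset (Mod × Pol)))]
        refine le_trans (le_of_eq ?_) (h.trans (le_of_eq ?_))
        · exact Finset.sum_congr rfl fun i _ => by ring
        · refine Finset.sum_congr rfl fun o _ => ?_
          simp only [Z]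
          rw [Finset.sum_mul, Finset.mul_sum]
          exact Finset.sum_congr rfl fun mp _ => by ring
      have e3 := mul_le_mul_of_nonneg_left e2 hη'.le
      have e4 : ∑ i, w i * t i
          = ∑ i, w i * (∑ π : Pol, p.p π * ((∑ mp : Mod × Pol, νc i mp * V mp.1 mp.2)
            - (∑ mp : Mod × Pol, νc i mp * V mp.1 π)))
            - η⁻¹ * ∑ i, w i * (∑ π : Pol, p.p π * klr (pairMixObs q (νc i) π) (Z π)) := by
        rw [Finset.mul_sum (a := η⁻¹), ← Finset.sum_sub_distrib]
        refine Finset.sum_congr rfl fun i _ => ?_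
        simp only [t]
        ring
      rw [e4, e1]
      simp only [A]
      linarith
    obtain ⟨i, hi0, hi⟩ := exists_ge_of_avg w t hw hw1 A hAt
    let νi : FDist (Mod × Pol) :=
      { p := νc i
        nonneg := fun mp => div_nonneg (by
          split_ifs
          · exact ν.nonneg _
          · exact le_rfl) hi0.le
        sum_one := by
          simp only [νc]
          rw [← Finset.sum_div]
          exact div_self hi0.ne' }
    have hνi : ∀ mp, νi.p mp ≠ 0 → part mp = some i := by
      intro mp h
      by_contra hne
      exact h (by simp [νi, νc, hne])
    rw [hAIR]
    refine le_trans ?_ (le_iSup _ i)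
    refine le_trans ?_ (le_iSup _ (⟨νi, hνi⟩ : {ν : FDist (Mod × Pol) //
      ∀ mp, ν.p mp ≠ 0 → part mp = some i}))
    have hac2 : ∀ π o, mixObs q (marg ν).p π o = 0 → pairMixObs q (νc i) π o = 0 := by
      intro π o ho
      rw [hZm] at ho
      have h1 := hJleZ π i o
      rw [ho] at h1
      rw [hPc, le_antisymm h1 (hJ0 π i o), zero_div]
    rw [sum_KL_of_ac hac2, ← EReal.coe_mul, ← EReal.coe_sub, EReal.coe_le_coe_iff]
    simp_rw [hZm]
    exact hi
  · -- the singular case: the value is bottom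
    push Not at hac
    obtain ⟨i, hi1, hi2⟩ := hac
    obtain ⟨π, hπ⟩ : ∃ π, p.p π ≠ 0 := by
      by_contra h
      push Not at h
      have := p.sum_one
      simp [h] at this
    obtain ⟨o, -, ho⟩ := Finset.exists_ne_zero_of_sum_ne_zero (by rw [hJw π i]; exact hi2)
    obtain ⟨mp, -, hmp⟩ := Finset.exists_ne_zero_of_sum_ne_zero ho
    have hpart : part mp = some i := by
      by_contra h
      simp [h] at hmp
    rw [if_pos hpart] at hmp
    have hJp : 0 < J π i o := lt_of_le_of_ne (hJ0 π i o) (Ne.symm ho)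
    have hZp : 0 < Z π o := hJp.trans_le (hJleZ π i o)
    have hnn : ∀ π mp o, (0 : EReal) ≤
        ((p.p π * ν.p mp * q mp.1 π o : ℝ) : EReal) * KL (post q part ν.p π o) ρ.p := by
      intro π mp o
      have hcoef : 0 ≤ p.p π * ν.p mp * q mp.1 π o :=
        mul_nonneg (mul_nonneg (p.nonneg _) (ν.nonneg _)) ((hq _ _).1 _)
      rcases (hZ0 π o).eq_or_lt with h | h
      · have : ν.p mp * q mp.1 π o = 0 :=
          (Finset.sum_eq_zero_iff_of_nonneg (fun mp _ => hνq π o mp)).1 h.symm mp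
            (Finset.mem_univ _)
        rw [mul_assoc, this]
        simp
      · refine mul_nonneg (by exact_mod_cast hcoef) (KL_nonneg' (fun i => ?_) ρ.nonneg ?_)
        · rw [hpost]; exact div_nonneg (hJ0 _ _ _) h.le
        · simp_rw [hpost]
          rw [← Finset.sum_div, hJZ, div_self h.ne', ρ.sum_one]
    have htop : ∑ π : Pol, ∑ mp : Mod × Pol, ∑ o : Obs,
        ((p.p π * ν.p mp * q mp.1 π o : ℝ) : EReal) * KL (post q part ν.p π o) ρ.p = ⊤ := by
      have hterm : ((p.p π * ν.p mp * q mp.1 π o : ℝ) : EReal)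
          * KL (post q part ν.p π o) ρ.p = ⊤ := by
        rw [KL_of_not_ac, EReal.coe_mul_top_of_pos]
        · rw [mul_assoc]
          exact mul_pos (lt_of_le_of_ne (p.nonneg π) (Ne.symm hπ))
            (lt_of_le_of_ne (hνq π o mp) (Ne.symm hmp))
        · intro h
          have := h i hi1
          rw [hpost] at this
          exact (div_pos hJp hZp).ne' this
      rw [← top_le_iff, ← hterm]
      calc ((p.p π * ν.p mp * q mp.1 π o : ℝ) : EReal) * KL (post q part ν.p π o) ρ.p
          ≤ ∑ o : Obs, ((p.p π * ν.p mp * q mp.1 π o : ℝ) : EReal)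
              * KL (post q part ν.p π o) ρ.p :=
            Finset.single_le_sum (f := fun o => ((p.p π * ν.p mp * q mp.1 π o : ℝ) : EReal)
              * KL (post q part ν.p π o) ρ.p) (fun o _ => hnn π mp o) (Finset.mem_univ o)
        _ ≤ ∑ mp : Mod × Pol, ∑ o : Obs, ((p.p π * ν.p mp * q mp.1 π o : ℝ) : EReal)
              * KL (post q part ν.p π o) ρ.p :=
            Finset.single_le_sum (f := fun mp : Mod × Pol => ∑ o : Obs,
              ((p.p π * ν.p mp * q mp.1 π o : ℝ) : EReal)
              * KL (post q part ν.p π o) ρ.p)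
              (fun mp _ => Finset.sum_nonneg fun o _ => hnn π mp o) (Finset.mem_univ mp)
        _ ≤ _ :=
            Finset.single_le_sum (f := fun π => ∑ mp : Mod × Pol, ∑ o : Obs,
              ((p.p π * ν.p mp * q mp.1 π o : ℝ) : EReal)
              * KL (post q part ν.p π o) ρ.p)
              (fun π _ => Finset.sum_nonneg fun mp _ => Finset.sum_nonneg fun o _ => hnn π mp o)
              (Finset.mem_univ π)
    unfold AIR
    simp only
    rw [htop, EReal.coe_mul_top_of_pos hη', EReal.sub_top]
    exact bot_le

end Aux

/-- **Lemma (`DEC^KL_η(𝓜,Φ) ≤ DEC^KL_η(𝓜̄(Φ)) + C(Φ)`).**  For every `η > 0`,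
the `Φ`-dependent DEC is bounded by the DEC of the `Φ`-aware convexification plus
`C(Φ)`; consequently if `C(Φ) ≤ 0` then
`max_{ρ∈Δ(Φ)} max_{ν∈Δ(Ψ)} min_{p∈Δ(Π)} AIR^Φ_{ρ,η}(p,ν) ≤ DEC^KL_η(𝓜̄(Φ))`. -/
theorem DECPhi_le_DECbar_add_CPhi
    {Pol Obs Mod I : Type*}
    [Fintype Pol] [Fintype Obs] [Fintype Mod] [Fintype I] [DecidableEq I]
    [Nonempty Pol] [Nonempty Obs] [Nonempty Mod]
    (q : Mod → Pol → Obs → ℝ)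
    (hq : ∀ m π, (∀ o, 0 ≤ q m π o) ∧ ∑ o, q m π o = 1)
    (V : Mod → Pol → ℝ)
    (hV : ∀ m π, V m π ∈ Set.Icc (0 : ℝ) 1)
    (part : Mod × Pol → Option I)
    (hnonempty : ∀ i : I, ∃ mp, part mp = some i)
    (η : ℝ) (hη : 0 < η) :
    DECPhi q V part η ≤ DECbar q V part η + ((CPhi V part : ℝ) : EReal) ∧
      (CPhi V part ≤ 0 → AIRmaxmin q V part η ≤ DECbar q V part η) := by
  have h1 := part_one q hq V hV part η hη
  refine ⟨h1, fun hC => (part_two q hq V part η hη).trans (h1.trans ?_)⟩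
  have h2 : ((CPhi V part : ℝ) : EReal) ≤ 0 := by exact_mod_cast hC
  calc DECbar q V part η + ((CPhi V part : ℝ) : EReal) ≤ DECbar q V part η + 0 := by gcongr
    _ = DECbar q V part η := add_zero _
end
end

section
/- Suppose the choice of model set is independent of the comparator: there is a partition Θ of 𝓜 into disjoint subsets such that Φ = { {(M, π) : M ∈ θ} : θ ∈ Θ, π ∈ Π }. Then for every η > 0, max_{ρ∈Δ(Φ)} max_{ν∈Δ(Ψ)} min_{p∈Δ(Π)} AIR^Φ_{ρ,η}(p,ν) = DEC^KL_η(𝓜̄(Φ)). -/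
open scoped BigOperators

noncomputable section

section Helpers

set_option linter.unusedSectionVars false

/-- The elementary relative-entropy term. -/
def relT (a b : ℝ) : ℝ := a * Real.log (a / b)

lemma relT_zero (b : ℝ) : relT 0 b = 0 := by simp [relT]

lemma relT_ge (a b : ℝ) (ha : 0 ≤ a) (hb : 0 ≤ b) (h : b = 0 → a = 0) : a - b ≤ relT a b := by
  rcases ha.eq_or_lt with h0 | h0
  · subst h0; rw [relT_zero]; linarith
  · have hb' : 0 < b := lt_of_le_of_ne hb (fun e => h0.ne' (h e.symm))
    have h1 := Real.one_sub_inv_le_log_of_pos (div_pos h0 hb')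
    have h2 := mul_le_mul_of_nonneg_left h1 ha
    have h3 : a * (1 - (a / b)⁻¹) = a - b := by field_simp
    unfold relT; linarith

lemma relT_smul (s a b : ℝ) : relT (s * a) (s * b) = s * relT a b := by
  by_cases hs : s = 0
  · subst hs; simp [relT]
  · unfold relT; rw [mul_div_mul_left _ _ hs]; ring

lemma relT_shift (a b r : ℝ) (hr : 0 < r) (h : b = 0 → a = 0) :
    relT a (b * r) = relT a b - a * Real.log r := by
  by_cases ha : a = 0
  · subst ha; simp [relT]
  · have hb : b ≠ 0 := fun e => ha (h e)
    unfold relT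
    rw [← div_div, Real.log_div (div_ne_zero ha hb) hr.ne']; ring

lemma relT_add (a1 b1 a2 b2 : ℝ) (ha1 : 0 ≤ a1) (hb1 : 0 ≤ b1) (ha2 : 0 ≤ a2) (hb2 : 0 ≤ b2)
    (h1 : b1 = 0 → a1 = 0) (h2 : b2 = 0 → a2 = 0) :
    relT (a1 + a2) (b1 + b2) ≤ relT a1 b1 + relT a2 b2 := by
  rcases (add_nonneg ha1 ha2).eq_or_lt with h0 | h0
  · have e1 : a1 = 0 := by linarith
    have e2 : a2 = 0 := by linarith
    subst e1; subst e2; simp [relT]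
  · have hb : 0 < b1 + b2 := by
      rcases (add_nonneg hb1 hb2).eq_or_lt with h | h
      · have := h1 (by linarith)
        have := h2 (by linarith)
        linarith
      · exact h
    set r := (a1 + a2) / (b1 + b2) with hr
    have hrp : 0 < r := div_pos h0 hb
    have k1 := relT_ge a1 (b1 * r) ha1 (by positivity)
      (fun e => h1 ((mul_eq_zero.mp e).resolve_right hrp.ne'))
    have k2 := relT_ge a2 (b2 * r) ha2 (by positivity)
      (fun e => h2 ((mul_eq_zero.mp e).resolve_right hrp.ne'))
    rw [relT_shift _ _ _ hrp h1] at k1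
    rw [relT_shift _ _ _ hrp h2] at k2
    have e : (b1 + b2) * r = a1 + a2 := by rw [hr]; field_simp
    have : relT (a1 + a2) (b1 + b2) = (a1 + a2) * Real.log r := rfl
    rw [this]; nlinarith

/-- Abstract minimax inequality by separation. -/
lemma minimax_sep {P E : Type*} [Fintype P] [Nonempty P] [DecidableEq P]
    [AddCommGroup E] [Module ℝ E]
    (S : Set E) (hS : S.Nonempty) (H : E → P → ℝ) (hcv : Convex ℝ S)
    (hH : ∀ x ∈ S, ∀ y ∈ S, ∀ a b : ℝ, 0 ≤ a → 0 ≤ b → a + b = 1 → ∀ π,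
      a * H x π + b * H y π ≤ H (a • x + b • y) π)
    (t : ℝ) (ht : ∀ x ∈ S, ∃ π, H x π ≤ t) :
    ∃ p : FDist P, ∀ x ∈ S, ∑ π, p.p π * H x π ≤ t := by
  let A : Set (P → ℝ) := {g | ∀ π, t < g π}
  let C : Set (P → ℝ) := {g | ∃ x ∈ S, ∀ π, g π ≤ H x π}
  have hAo : IsOpen A := by
    have : A = ⋂ π, {g : P → ℝ | t < g π} := by ext; simp [A]
    rw [this]
    exact isOpen_iInter_of_finite fun π => isOpen_lt continuous_const (continuous_apply π)
  have hAc : Convex ℝ A := by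
    intro x hx y hy a b ha hb hab π
    have h1 := hx π
    have h2 := hy π
    simp only [Pi.add_apply, Pi.smul_apply, smul_eq_mul]
    rcases ha.eq_or_lt with h | h
    · subst h
      have : b = 1 := by linarith
      subst this; linarith
    · have : b = 1 - a := by linarith
      subst this
      nlinarith
  have hCc : Convex ℝ C := by
    rintro x ⟨x', hx', hx⟩ y ⟨y', hy', hy⟩ a b ha hb hab
    refine ⟨a • x' + b • y', hcv hx' hy' ha hb hab, fun π => ?_⟩
    refine le_trans ?_ (hH x' hx' y' hy' a b ha hb hab π)
    simp only [Pi.add_apply, Pi.smul_apply, smul_eq_mul]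
    exact add_le_add (mul_le_mul_of_nonneg_left (hx π) ha) (mul_le_mul_of_nonneg_left (hy π) hb)
  have hdis : Disjoint A C := by
    rw [Set.disjoint_left]
    rintro g hg ⟨x, hx, hgx⟩
    obtain ⟨π, hπ⟩ := ht x hx
    have := hg π
    have := hgx π
    linarith
  obtain ⟨f, u, hfA, hfC⟩ := geometric_hahn_banach_open hAc hAo hCc hdis
  let w : P → ℝ := fun π => - f (Pi.single π 1)
  have hf : ∀ g : P → ℝ, f g = - ∑ π, w π * g π := by
    intro g
    conv_lhs => rw [pi_eq_sum_univ' g]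
    rw [map_sum, ← Finset.sum_neg_distrib]
    refine Finset.sum_congr rfl fun π _ => ?_
    rw [map_smul, smul_eq_mul]
    simp only [w]; ring
  have hw : ∀ π, 0 ≤ w π := by
    intro π
    by_contra hneg
    push Not at hneg
    obtain ⟨x, hx⟩ := hS
    let n : ℝ := (f (H x) - u + 1) / (- w π)
    have hb0 : u ≤ f (H x) := hfC _ ⟨x, hx, fun _ => le_rfl⟩
    have hn : 0 ≤ n := div_nonneg (by linarith) (by linarith)
    have := hfC (H x - n • Pi.single π 1) ⟨x, hx, fun π' => by
      simp only [Pi.sub_apply, Pi.smul_apply, smul_eq_mul, Pi.single_apply]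
      split_ifs <;> linarith⟩
    rw [map_sub, map_smul, smul_eq_mul] at this
    have e : f (Pi.single π 1) = - w π := by simp [w]
    rw [e] at this
    have e2 : n * (- w π) = f (H x) - u + 1 := by
      exact div_mul_cancel₀ _ (by linarith)
    linarith
  have hAf : ∀ x ∈ S, ∀ s : ℝ, t < s → ∑ π, w π * H x π < (∑ π, w π) * s := by
    intro x hx s hs
    have h1 := hfA (fun _ => s) (fun _ => hs)
    have h2 := hfC (H x) ⟨x, hx, fun _ => le_rfl⟩
    rw [hf] at h1 h2
    rw [Finset.sum_mul]
    linarith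
  have hWpos : 0 < ∑ π, w π := by
    rcases (Finset.sum_nonneg fun π _ => hw π : 0 ≤ ∑ π, w π).eq_or_lt with h | h
    · exfalso
      have hz : ∀ π, w π = 0 := fun π =>
        (Finset.sum_eq_zero_iff_of_nonneg (fun π _ => hw π)).mp h.symm π (Finset.mem_univ _)
      obtain ⟨x, hx⟩ := hS
      have := hAf x hx (t + 1) (by linarith)
      simp [hz] at this
    · exact h
  refine ⟨⟨fun π => w π / ∑ π, w π, fun π => div_nonneg (hw π) hWpos.le, ?_⟩, ?_⟩
  · rw [← Finset.sum_div, div_self hWpos.ne']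
  · intro x hx
    have e : ∑ π, w π / (∑ π, w π) * H x π = (∑ π, w π * H x π) / ∑ π, w π := by
      rw [Finset.sum_div]; exact Finset.sum_congr rfl fun π _ => by ring
    simp only [e]
    refine le_of_forall_gt_imp_ge_of_dense fun s hs => ?_
    rw [div_le_iff₀ hWpos, mul_comm]
    exact (hAf x hx s hs).le

/-! Sums in the extended reals. -/

lemma ereal_sum_ne_bot {X : Type*} (s : Finset X) (f : X → EReal) (h : ∀ x ∈ s, f x ≠ ⊥) :
    ∑ x ∈ s, f x ≠ ⊥ := by
  classical
  induction s using Finset.induction_on with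
  | empty => simp
  | insert a s ha ih =>
    rw [Finset.sum_insert ha]
    simp only [ne_eq, EReal.add_eq_bot_iff, not_or]
    exact ⟨h a (by simp), ih fun x hx => h x (by simp [hx])⟩

lemma ereal_sum_eq_top {X : Type*} (s : Finset X) (f : X → EReal) (h : ∀ x ∈ s, f x ≠ ⊥)
    (x : X) (hx : x ∈ s) (hf : f x = ⊤) : ∑ x ∈ s, f x = ⊤ := by
  classical
  rw [← Finset.add_sum_erase s f hx, hf]
  exact EReal.top_add_of_ne_bot (ereal_sum_ne_bot _ _ fun y hy => h y (Finset.mem_of_mem_erase hy))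

lemma ereal_coe_sum {X : Type*} (s : Finset X) (f : X → ℝ) :
    ((∑ x ∈ s, f x : ℝ) : EReal) = ∑ x ∈ s, (f x : EReal) := by
  classical
  induction s using Finset.induction_on with
  | empty => simp
  | insert a s ha ih => rw [Finset.sum_insert ha, Finset.sum_insert ha, EReal.coe_add, ih]

lemma KL_ne_bot {X : Type*} [Fintype X] (p q : X → ℝ) : KL p q ≠ ⊥ := by
  unfold KL; split_ifs <;> simp

lemma KL_top {X : Type*} [Fintype X] (p q : X → ℝ) (x : X) (h : q x = 0) (h' : p x ≠ 0) :
    KL p q = ⊤ := by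
  unfold KL; rw [if_neg]; push Not; exact ⟨x, h, h'⟩

lemma KL_real {X : Type*} [Fintype X] (p q : X → ℝ) (h : ∀ x, q x = 0 → p x = 0) :
    KL p q = ((∑ x, relT (p x) (q x) : ℝ) : EReal) := by
  unfold KL; rw [if_pos h]; rfl

lemma coe_mul_ne_bot (a : ℝ) (ha : 0 ≤ a) (x : EReal) (hx : x ≠ ⊥) : (a : EReal) * x ≠ ⊥ := by
  induction x with
  | bot => exact absurd rfl hx
  | coe x => rw [← EReal.coe_mul]; exact EReal.coe_ne_bot _
  | top =>
    rcases ha.eq_or_lt with h | h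
    · subst h; simp
    · rw [EReal.coe_mul_top_of_pos h]; simp

lemma sub_mul_top (a η : ℝ) (hη : 0 < η) : (a : EReal) - ((η⁻¹ : ℝ) : EReal) * ⊤ = ⊥ := by
  rw [EReal.coe_mul_top_of_pos (inv_pos.mpr hη)]; simp

/-! Cell masses. -/

section Cells
variable {X O I : Type*} [Fintype X] [Fintype O] [Fintype I] [DecidableEq I]

def Nc (Q : X → O → ℝ) (k : X → I) (ν : X → ℝ) (o : O) (i : I) : ℝ :=
  ∑ x, if k x = i then ν x * Q x o else 0

def al (k : X → I) (ν : X → ℝ) (i : I) : ℝ := ∑ x, if k x = i then ν x else 0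

def Zc (Q : X → O → ℝ) (ν : X → ℝ) (o : O) : ℝ := ∑ x, ν x * Q x o

def Dc (Q : X → O → ℝ) (k : X → I) (ν : X → ℝ) (c : O → ℝ) : ℝ :=
  ∑ i, ∑ o, relT (Nc Q k ν o i) (al k ν i * c o)

variable (Q : X → O → ℝ) (k : X → I) (ν : X → ℝ)

lemma sum_cells (f : X → ℝ) : ∑ i, ∑ x, (if k x = i then f x else 0) = ∑ x, f x := by
  rw [Finset.sum_comm]; simp

lemma al_sum : ∑ i, al k ν i = ∑ x, ν x := sum_cells k ν

lemma Nc_sum_i (o : O) : ∑ i, Nc Q k ν o i = Zc Q ν o := sum_cells k fun x => ν x * Q x o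

lemma Nc_sum_o (hQ : ∀ x, ∑ o, Q x o = 1) (i : I) : ∑ o, Nc Q k ν o i = al k ν i := by
  unfold Nc al
  rw [Finset.sum_comm]
  refine Finset.sum_congr rfl fun x _ => ?_
  split_ifs
  · rw [← Finset.mul_sum, hQ, mul_one]
  · simp

lemma Nc_nonneg (hQ : ∀ x o, 0 ≤ Q x o) (hν : ∀ x, 0 ≤ ν x) (o : O) (i : I) :
    0 ≤ Nc Q k ν o i :=
  Finset.sum_nonneg fun x _ => by
    split_ifs
    · exact mul_nonneg (hν x) (hQ x o)
    · exact le_rfl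

lemma al_nonneg (hν : ∀ x, 0 ≤ ν x) (i : I) : 0 ≤ al k ν i :=
  Finset.sum_nonneg fun x _ => by
    split_ifs
    · exact hν x
    · exact le_rfl

lemma Zc_nonneg (hQ : ∀ x o, 0 ≤ Q x o) (hν : ∀ x, 0 ≤ ν x) (o : O) : 0 ≤ Zc Q ν o :=
  Finset.sum_nonneg fun x _ => mul_nonneg (hν x) (hQ x o)

lemma Zc_sum (hQ : ∀ x, ∑ o, Q x o = 1) : ∑ o, Zc Q ν o = ∑ x, ν x := by
  unfold Zc
  rw [Finset.sum_comm]
  refine Finset.sum_congr rfl fun x _ => ?_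
  rw [← Finset.mul_sum, hQ, mul_one]

lemma Nc_zero_of_al (hν : ∀ x, 0 ≤ ν x) (o : O) (i : I) (h : al k ν i = 0) :
    Nc Q k ν o i = 0 := by
  have := (Finset.sum_eq_zero_iff_of_nonneg (fun x _ => by
    split_ifs
    · exact hν x
    · exact le_rfl)).mp h
  refine Finset.sum_eq_zero fun x hx => ?_
  have h2 := this x hx
  split_ifs with hk
  · rw [if_pos hk] at h2; rw [h2, zero_mul]
  · rfl

lemma Nc_zero_of_Zc (hQ : ∀ x o, 0 ≤ Q x o) (hν : ∀ x, 0 ≤ ν x) (o : O) (i : I)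
    (h : Zc Q ν o = 0) : Nc Q k ν o i = 0 := by
  rw [← Nc_sum_i Q k] at h
  exact (Finset.sum_eq_zero_iff_of_nonneg (fun i _ => Nc_nonneg Q k ν hQ hν o i)).mp h i
    (Finset.mem_univ _)

lemma Nc_zero_mul (hν : ∀ x, 0 ≤ ν x) (c : O → ℝ)
    (hc : ∀ o i, c o = 0 → Nc Q k ν o i = 0) (o : O) (i : I) (h : al k ν i * c o = 0) :
    Nc Q k ν o i = 0 := by
  rcases mul_eq_zero.mp h with h | h
  · exact Nc_zero_of_al Q k ν hν o i h
  · exact hc o i h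

lemma Dc_nonneg (hQ : ∀ x o, 0 ≤ Q x o) (hQ1 : ∀ x, ∑ o, Q x o = 1) (hν : ∀ x, 0 ≤ ν x)
    (c : O → ℝ) (hc0 : ∀ o, 0 ≤ c o) (hc1 : ∑ o, c o = 1)
    (hc : ∀ o i, c o = 0 → Nc Q k ν o i = 0) : 0 ≤ Dc Q k ν c := by
  refine Finset.sum_nonneg fun i _ => ?_
  have : ∑ o, (Nc Q k ν o i - al k ν i * c o) ≤ ∑ o, relT (Nc Q k ν o i) (al k ν i * c o) :=
    Finset.sum_le_sum fun o _ => relT_ge _ _ (Nc_nonneg Q k ν hQ hν o i)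
      (mul_nonneg (al_nonneg k ν hν i) (hc0 o)) (Nc_zero_mul Q k ν hν c hc o i)
  rw [Finset.sum_sub_distrib, Nc_sum_o Q k ν hQ1, ← Finset.mul_sum, hc1] at this
  linarith

/-- Optimality of the mean as reference. -/
lemma Dc_mean_le (hQ : ∀ x o, 0 ≤ Q x o) (hQ1 : ∀ x, ∑ o, Q x o = 1) (hν : ∀ x, 0 ≤ ν x)
    (hν1 : ∑ x, ν x = 1)
    (c : O → ℝ) (hc0 : ∀ o, 0 ≤ c o) (hc1 : ∑ o, c o = 1)
    (hc : ∀ o i, c o = 0 → Nc Q k ν o i = 0) : Dc Q k ν (Zc Q ν) ≤ Dc Q k ν c := by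
  have key : ∀ o i, relT (Nc Q k ν o i) (al k ν i * c o)
      = relT (Nc Q k ν o i) (al k ν i * Zc Q ν o) + Nc Q k ν o i * Real.log (Zc Q ν o / c o) := by
    intro o i
    by_cases h : Nc Q k ν o i = 0
    · rw [h]; simp [relT]
    · have ha : al k ν i ≠ 0 := fun e => h (Nc_zero_of_al Q k ν hν o i e)
      have hz : Zc Q ν o ≠ 0 := fun e => h (Nc_zero_of_Zc Q k ν hQ hν o i e)
      have hcc : c o ≠ 0 := fun e => h (hc o i e)
      unfold relT
      rw [Real.log_div h (mul_ne_zero ha hcc), Real.log_div h (mul_ne_zero ha hz),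
        Real.log_div hz hcc, Real.log_mul ha hcc, Real.log_mul ha hz]
      ring
  have e : Dc Q k ν c = Dc Q k ν (Zc Q ν) + ∑ o, relT (Zc Q ν o) (c o) := by
    have : ∑ o, relT (Zc Q ν o) (c o) = ∑ i, ∑ o, Nc Q k ν o i * Real.log (Zc Q ν o / c o) := by
      rw [Finset.sum_comm]
      refine Finset.sum_congr rfl fun o _ => ?_
      rw [← Finset.sum_mul, Nc_sum_i]; rfl
    rw [this]
    unfold Dc
    rw [← Finset.sum_add_distrib]
    refine Finset.sum_congr rfl fun i _ => ?_
    rw [← Finset.sum_add_distrib]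
    exact Finset.sum_congr rfl fun o _ => key o i
  have h2 : ∑ o, (Zc Q ν o - c o) ≤ ∑ o, relT (Zc Q ν o) (c o) :=
    Finset.sum_le_sum fun o _ => relT_ge _ _ (Zc_nonneg Q ν hQ hν o) (hc0 o) fun h => by
      rw [← Nc_sum_i Q k]; exact Finset.sum_eq_zero fun i _ => hc o i h
  rw [Finset.sum_sub_distrib, Zc_sum Q ν hQ1, hν1, hc1] at h2
  linarith

/-- Optimality of the marginal prior as reference. -/
lemma Dc_prior_le (hQ : ∀ x o, 0 ≤ Q x o) (hQ1 : ∀ x, ∑ o, Q x o = 1) (hν : ∀ x, 0 ≤ ν x)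
    (hν1 : ∑ x, ν x = 1)
    (ρ : I → ℝ) (hρ0 : ∀ i, 0 ≤ ρ i) (hρ1 : ∑ i, ρ i = 1)
    (hρ : ∀ i, ρ i = 0 → al k ν i = 0) :
    Dc Q k ν (Zc Q ν) ≤ ∑ i, ∑ o, relT (Nc Q k ν o i) (ρ i * Zc Q ν o) := by
  have key : ∀ o i, relT (Nc Q k ν o i) (ρ i * Zc Q ν o)
      = relT (Nc Q k ν o i) (al k ν i * Zc Q ν o)
        + Nc Q k ν o i * Real.log (al k ν i / ρ i) := by
    intro o i
    by_cases h : Nc Q k ν o i = 0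
    · rw [h]; simp [relT]
    · have ha : al k ν i ≠ 0 := fun e => h (Nc_zero_of_al Q k ν hν o i e)
      have hz : Zc Q ν o ≠ 0 := fun e => h (Nc_zero_of_Zc Q k ν hQ hν o i e)
      have hcc : ρ i ≠ 0 := fun e => ha (hρ i e)
      unfold relT
      rw [Real.log_div h (mul_ne_zero hcc hz), Real.log_div h (mul_ne_zero ha hz),
        Real.log_div ha hcc, Real.log_mul hcc hz, Real.log_mul ha hz]
      ring
  have e : ∑ i, ∑ o, relT (Nc Q k ν o i) (ρ i * Zc Q ν o)
      = Dc Q k ν (Zc Q ν) + ∑ i, relT (al k ν i) (ρ i) := by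
    unfold Dc
    rw [← Finset.sum_add_distrib]
    refine Finset.sum_congr rfl fun i _ => ?_
    rw [Finset.sum_congr rfl fun o _ => key o i, Finset.sum_add_distrib, ← Finset.sum_mul,
      Nc_sum_o Q k ν hQ1]; rfl
  have h2 : ∑ i, (al k ν i - ρ i) ≤ ∑ i, relT (al k ν i) (ρ i) :=
    Finset.sum_le_sum fun i _ => relT_ge _ _ (al_nonneg k ν hν i) (hρ0 i) (hρ i)
  rw [Finset.sum_sub_distrib, al_sum, hν1, hρ1] at h2
  linarith

lemma Nc_lin (ν' : X → ℝ) (a b : ℝ) (o : O) (i : I) :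
    Nc Q k (a • ν + b • ν') o i = a * Nc Q k ν o i + b * Nc Q k ν' o i := by
  unfold Nc
  rw [Finset.mul_sum, Finset.mul_sum, ← Finset.sum_add_distrib]
  refine Finset.sum_congr rfl fun x _ => ?_
  simp only [Pi.add_apply, Pi.smul_apply, smul_eq_mul]
  split_ifs <;> ring

lemma al_lin (ν' : X → ℝ) (a b : ℝ) (i : I) :
    al k (a • ν + b • ν') i = a * al k ν i + b * al k ν' i := by
  unfold al
  rw [Finset.mul_sum, Finset.mul_sum, ← Finset.sum_add_distrib]
  refine Finset.sum_congr rfl fun x _ => ?_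
  simp only [Pi.add_apply, Pi.smul_apply, smul_eq_mul]
  split_ifs <;> ring

lemma Dc_convex (hQ : ∀ x o, 0 ≤ Q x o) (ν' : X → ℝ)
    (hν : ∀ x, 0 ≤ ν x) (hν' : ∀ x, 0 ≤ ν' x)
    (c : O → ℝ) (hc0 : ∀ o, 0 ≤ c o)
    (hc : ∀ o i, c o = 0 → Nc Q k ν o i = 0) (hc' : ∀ o i, c o = 0 → Nc Q k ν' o i = 0)
    (a b : ℝ) (ha : 0 ≤ a) (hb : 0 ≤ b) :
    Dc Q k (a • ν + b • ν') c ≤ a * Dc Q k ν c + b * Dc Q k ν' c := by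
  unfold Dc
  rw [Finset.mul_sum, Finset.mul_sum, ← Finset.sum_add_distrib]
  refine Finset.sum_le_sum fun i _ => ?_
  rw [Finset.mul_sum, Finset.mul_sum, ← Finset.sum_add_distrib]
  refine Finset.sum_le_sum fun o _ => ?_
  rw [Nc_lin, al_lin, add_mul, ← relT_smul, ← relT_smul, mul_assoc, mul_assoc]
  have h1 := Nc_nonneg Q k ν hQ hν o i
  have h2 := Nc_nonneg Q k ν' hQ hν' o i
  have h3 := al_nonneg k ν hν i
  have h4 := al_nonneg k ν' hν' i
  have h5 := hc0 o
  refine relT_add _ _ _ _ (by positivity) (by positivity) (by positivity) (by positivity) ?_ ?_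
  · intro h
    rcases mul_eq_zero.mp h with h | h
    · rw [h, zero_mul]
    · rw [Nc_zero_mul Q k ν hν c hc o i h, mul_zero]
  · intro h
    rcases mul_eq_zero.mp h with h | h
    · rw [h, zero_mul]
    · rw [Nc_zero_mul Q k ν' hν' c hc' o i h, mul_zero]

end Cells

end Helpers

section MainHelpers

set_option linter.unusedSectionVars false
set_option linter.unusedVariables false

variable {Pol Obs Mod I : Type*}
variable [Fintype Pol] [Fintype Obs] [Fintype Mod] [Fintype I] [DecidableEq I]

def Rw (V : Mod → Pol → ℝ) (ν : Mod × Pol → ℝ) (π : Pol) : ℝ :=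
  ∑ x : Mod × Pol, ν x * (V x.1 x.2 - V x.1 π)

def Qx (q : Mod → Pol → Obs → ℝ) (π : Pol) : Mod × Pol → Obs → ℝ := fun x => q x.1 π

def Hf (q : Mod → Pol → Obs → ℝ) (V : Mod → Pol → ℝ) (k : Mod × Pol → I) (η : ℝ)
    (c : Pol → Obs → ℝ) (ν : Mod × Pol → ℝ) (π : Pol) : ℝ :=
  Rw V ν π - η⁻¹ * Dc (Qx q π) k ν (c π)

def Zf (q : Mod → Pol → Obs → ℝ) (ν : Mod × Pol → ℝ) : Pol → Obs → ℝ :=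
  fun π => Zc (Qx q π) ν

/-- the objective of the DEC -/
def DT (q : Mod → Pol → Obs → ℝ) (V : Mod → Pol → ℝ) (η : ℝ) (p : Pol → ℝ) (μ : Mod → ℝ)
    (c : Pol → Obs → ℝ) : EReal :=
  ((∑ π : Pol, p π * ((⨆ π' : Pol, ∑ m : Mod, μ m * V m π') - ∑ m : Mod, μ m * V m π) : ℝ) : EReal)
    - ((η⁻¹ : ℝ) : EReal) * ∑ π : Pol, ((p π : ℝ) : EReal) * KL (mixObs q μ π) (c π)

variable (q : Mod → Pol → Obs → ℝ) (V : Mod → Pol → ℝ) (k : Mod × Pol → I) (η : ℝ)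

lemma post_eq (ν : Mod × Pol → ℝ) (π : Pol) (o : Obs) (i : I) :
    post q (fun x => some (k x)) ν π o i = Nc (Qx q π) k ν o i / Zc (Qx q π) ν o := by
  simp [post, Nc, Zc, Qx]

lemma AIR_real (hq : ∀ m π, (∀ o, 0 ≤ q m π o) ∧ ∑ o, q m π o = 1)
    (ρ : I → ℝ) (p : Pol → ℝ) (ν : Mod × Pol → ℝ)
    (hν : ∀ x, 0 ≤ ν x) (hρ : ∀ i, ρ i = 0 → al k ν i = 0) :
    AIR q V (fun x => some (k x)) η ρ p ν = ((∑ π, p π * (Rw V ν π -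
      η⁻¹ * ∑ i, ∑ o, relT (Nc (Qx q π) k ν o i) (ρ i * Zc (Qx q π) ν o)) : ℝ) : EReal) := by
  have hKL : ∀ π o, KL (post q (fun x => some (k x)) ν π o) ρ
      = ((∑ i, relT (Nc (Qx q π) k ν o i / Zc (Qx q π) ν o) (ρ i) : ℝ) : EReal) := by
    intro π o
    rw [KL_real]
    · simp only [post_eq]
    · intro i hi
      rw [post_eq, Nc_zero_of_al (Qx q π) k ν hν o i (hρ i hi), zero_div]
  have hterm : ∀ π o i, Zc (Qx q π) ν o * relT (Nc (Qx q π) k ν o i / Zc (Qx q π) ν o) (ρ i)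
      = relT (Nc (Qx q π) k ν o i) (ρ i * Zc (Qx q π) ν o) := by
    intro π o i
    by_cases hz : Zc (Qx q π) ν o = 0
    · rw [hz, Nc_zero_of_Zc (Qx q π) k ν (fun x o => (hq x.1 π).1 o) hν o i hz, relT_zero, zero_mul]
    · rw [← relT_smul, mul_div_cancel₀ _ hz, mul_comm (ρ i)]
  unfold AIR
  simp only [hKL, ← EReal.coe_mul, ← ereal_coe_sum, ← EReal.coe_sub]
  congr 1
  rw [Finset.mul_sum, ← Finset.sum_sub_distrib]
  refine Finset.sum_congr rfl fun π _ => ?_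
  rw [mul_sub]
  congr 1
  · unfold Rw; rw [Finset.mul_sum]
    exact Finset.sum_congr rfl fun x _ => by ring
  · rw [← mul_assoc, mul_comm (p π), mul_assoc]
    congr 1
    rw [Finset.sum_comm, Finset.sum_comm (f := fun i o =>
      relT (Nc (Qx q π) k ν o i) (ρ i * Zc (Qx q π) ν o)), Finset.mul_sum]
    refine Finset.sum_congr rfl fun o _ => ?_
    rw [← Finset.sum_mul]
    simp only [← hterm]
    rw [← Finset.mul_sum, ← mul_assoc]
    congr 1
    unfold Zc Qx
    rw [Finset.mul_sum]
    exact Finset.sum_congr rfl fun x _ => by ring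

lemma AIR_bot (hq : ∀ m π, (∀ o, 0 ≤ q m π o) ∧ ∑ o, q m π o = 1) (hη : 0 < η)
    (ρ : I → ℝ) (p : FDist Pol) (ν : Mod × Pol → ℝ)
    (hν : ∀ x, 0 ≤ ν x) (i : I) (hi : ρ i = 0) (hi' : al k ν i ≠ 0) :
    AIR q V (fun x => some (k x)) η ρ p.p ν = ⊥ := by
  obtain ⟨π, hπ⟩ : ∃ π, p.p π ≠ 0 := by
    by_contra h
    push Not at h
    have := p.sum_one
    simp [h] at this
  obtain ⟨o, ho⟩ : ∃ o, Nc (Qx q π) k ν o i ≠ 0 := by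
    by_contra h
    push Not at h
    apply hi'
    rw [← Nc_sum_o (Qx q π) k ν (fun x => (hq x.1 π).2)]
    exact Finset.sum_eq_zero fun o _ => h o
  have hz : Zc (Qx q π) ν o ≠ 0 := fun e =>
    ho (Nc_zero_of_Zc (Qx q π) k ν (fun x o => (hq x.1 π).1 o) hν o i e)
  obtain ⟨x, -, hx⟩ := Finset.exists_ne_zero_of_sum_ne_zero hz
  have hw : ∀ π x o, 0 ≤ p.p π * ν x * q x.1 π o := fun π x o =>
    mul_nonneg (mul_nonneg (p.nonneg π) (hν x)) ((hq x.1 π).1 o)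
  have hnb : ∀ π (x : Mod × Pol) o, ((p.p π * ν x * q x.1 π o : ℝ) : EReal)
      * KL (post q (fun x => some (k x)) ν π o) ρ ≠ ⊥ := fun π x o =>
    coe_mul_ne_bot _ (hw π x o) _ (KL_ne_bot _ _)
  unfold AIR
  rw [ereal_sum_eq_top _ _ _ π (Finset.mem_univ _)]
  · exact sub_mul_top _ _ hη
  · apply ereal_sum_eq_top _ _ _ x (Finset.mem_univ _)
    · apply ereal_sum_eq_top _ _ _ o (Finset.mem_univ _)
      · rw [KL_top _ _ i hi]
        · apply EReal.coe_mul_top_of_pos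
          refine lt_of_le_of_ne (hw π x o) (Ne.symm ?_)
          rw [mul_assoc]
          exact mul_ne_zero hπ hx
        · rw [post_eq]; exact div_ne_zero ho hz
      · exact fun o _ => hnb π x o
    · exact fun x _ => ereal_sum_ne_bot _ _ fun o _ => hnb π x o
  · exact fun π _ => ereal_sum_ne_bot _ _ fun x _ => ereal_sum_ne_bot _ _ fun o _ => hnb π x o

lemma AIR_le (hq : ∀ m π, (∀ o, 0 ≤ q m π o) ∧ ∑ o, q m π o = 1) (hη : 0 < η)
    (ρ : FDist I) (p : FDist Pol) (ν : FDist (Mod × Pol)) :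
    AIR q V (fun x => some (k x)) η ρ.p p.p ν.p
      ≤ ((∑ π, p.p π * Hf q V k η (Zf q ν.p) ν.p π : ℝ) : EReal) := by
  by_cases h : ∀ i, ρ.p i = 0 → al k ν.p i = 0
  · rw [AIR_real q V k η hq _ _ _ ν.nonneg h, EReal.coe_le_coe_iff]
    refine Finset.sum_le_sum fun π _ => mul_le_mul_of_nonneg_left ?_ (p.nonneg π)
    unfold Hf Zf
    have := Dc_prior_le (Qx q π) k ν.p (fun x o => (hq x.1 π).1 o) (fun x => (hq x.1 π).2)
      ν.nonneg ν.sum_one ρ.p ρ.nonneg ρ.sum_one h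
    have := mul_le_mul_of_nonneg_left this (inv_pos.mpr hη).le
    linarith
  · push Not at h
    obtain ⟨i, h1, h2⟩ := h
    rw [AIR_bot q V k η hq hη _ _ _ ν.nonneg i h1 h2]
    exact bot_le

/-- marginal over cells -/
def alD (ν : FDist (Mod × Pol)) : FDist I :=
  ⟨al k ν.p, al_nonneg k ν.p ν.nonneg, by rw [al_sum, ν.sum_one]⟩

lemma AIR_eq (hq : ∀ m π, (∀ o, 0 ≤ q m π o) ∧ ∑ o, q m π o = 1)
    (p : FDist Pol) (ν : FDist (Mod × Pol)) :
    AIR q V (fun x => some (k x)) η (alD k ν).p p.p ν.p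
      = ((∑ π, p.p π * Hf q V k η (Zf q ν.p) ν.p π : ℝ) : EReal) := by
  rw [AIR_real q V k η hq (alD k ν).p _ _ ν.nonneg (fun i h => h)]
  rfl

/-- model marginal -/
def margD (ν : FDist (Mod × Pol)) : FDist Mod :=
  ⟨fun m => ∑ π, ν.p (m, π), fun m => Finset.sum_nonneg fun π _ => ν.nonneg _, by
    rw [← Fintype.sum_prod_type]; exact ν.sum_one⟩

lemma mixObs_marg (ν : FDist (Mod × Pol)) : mixObs q (margD ν).p = Zf q ν.p := by
  ext π o
  simp only [mixObs, margD, Zf, Zc, Qx]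
  rw [Fintype.sum_prod_type]
  exact Finset.sum_congr rfl fun m _ => Finset.sum_mul _ _ _

/-- conditional model distribution given a cell -/
def condD (ν : FDist (Mod × Pol)) (i : I) (hi : 0 < al k ν.p i) : FDist Mod :=
  ⟨fun m => (∑ π, if k (m, π) = i then ν.p (m, π) else 0) / al k ν.p i,
    fun m => div_nonneg (Finset.sum_nonneg fun π _ => by
      split_ifs
      · exact ν.nonneg _
      · exact le_rfl) hi.le, by
    rw [← Finset.sum_div, div_eq_one_iff_eq hi.ne']
    exact (Fintype.sum_prod_type (fun x => if k x = i then ν.p x else 0)).symm⟩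

lemma condD_sum (ν : FDist (Mod × Pol)) (i : I) (hi : 0 < al k ν.p i) (F : Mod → ℝ) :
    ∑ m, (condD k ν i hi).p m * F m = (∑ x, if k x = i then ν.p x * F x.1 else 0) / al k ν.p i := by
  rw [Fintype.sum_prod_type, Finset.sum_div]
  refine Finset.sum_congr rfl fun m _ => ?_
  simp only [condD]
  rw [div_mul_eq_mul_div, Finset.sum_mul]
  simp only [ite_mul, zero_mul]

lemma DT_real (p : Pol → ℝ) (μ : Mod → ℝ) (c : Pol → Obs → ℝ)
    (h : ∀ π o, c π o = 0 → mixObs q μ π o = 0) :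
    DT q V η p μ c = ((∑ π, p π * ((⨆ π' : Pol, ∑ m : Mod, μ m * V m π') - ∑ m : Mod, μ m * V m π
      - η⁻¹ * ∑ o, relT (mixObs q μ π o) (c π o)) : ℝ) : EReal) := by
  unfold DT
  simp only [fun π => KL_real _ _ (h π), ← EReal.coe_mul, ← ereal_coe_sum, ← EReal.coe_sub]
  congr 1
  rw [Finset.mul_sum, ← Finset.sum_sub_distrib]
  exact Finset.sum_congr rfl fun π _ => by ring

lemma upper (k2 : ∀ x y, k x = k y → x.2 = y.2)
    (hq : ∀ m π, (∀ o, 0 ≤ q m π o) ∧ ∑ o, q m π o = 1) (hη : 0 < η)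
    (p : FDist Pol) (ν : FDist (Mod × Pol)) :
    ∃ i, ∃ μ : FDist Mod, (∀ m, μ.p m ≠ 0 → ∃ π : Pol, k (m, π) = i) ∧
      ((∑ π, p.p π * Hf q V k η (Zf q ν.p) ν.p π : ℝ) : EReal) ≤ DT q V η p.p μ.p (Zf q ν.p) := by
  let T : ℝ := ∑ π, p.p π * Hf q V k η (Zf q ν.p) ν.p π
  -- unnormalised cell value
  let Y : I → ℝ := fun i => ∑ π, p.p π *
    ((∑ x, if k x = i then ν.p x * (V x.1 x.2 - V x.1 π) else 0)
      - η⁻¹ * ∑ o, relT (Nc (Qx q π) k ν.p o i) (al k ν.p i * Zf q ν.p π o))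
  have hTY : T = ∑ i, Y i := by
    simp only [T, Y]
    rw [Finset.sum_comm]
    refine Finset.sum_congr rfl fun π _ => ?_
    rw [← Finset.mul_sum, Finset.sum_sub_distrib, sum_cells k, ← Finset.mul_sum]
    rfl
  have hex : ∃ i, 0 < al k ν.p i ∧ al k ν.p i * T ≤ Y i := by
    by_contra hcon
    push Not at hcon
    have hzero : ∀ i, al k ν.p i = 0 → Y i = 0 := by
      intro i hi
      have hx := (Finset.sum_eq_zero_iff_of_nonneg (fun x _ => by
        split_ifs
        · exact ν.nonneg x
        · exact le_rfl)).mp hi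
      have hx0 : ∀ x, k x = i → ν.p x = 0 := fun x h => by
        have := hx x (Finset.mem_univ _)
        rwa [if_pos h] at this
      refine Finset.sum_eq_zero fun π _ => ?_
      have e1 : ∑ x, (if k x = i then ν.p x * (V x.1 x.2 - V x.1 π) else 0) = 0 :=
        Finset.sum_eq_zero fun x _ => by
          split_ifs with h
          · rw [hx0 x h, zero_mul]
          · rfl
      have e2 : ∑ o, relT (Nc (Qx q π) k ν.p o i) (al k ν.p i * Zf q ν.p π o) = 0 :=
        Finset.sum_eq_zero fun o _ => by
          rw [Nc_zero_of_al (Qx q π) k ν.p ν.nonneg o i hi, relT_zero]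
      rw [e1, e2]; ring
    obtain ⟨i0, -, hi0⟩ : ∃ i ∈ Finset.univ, al k ν.p i ≠ 0 := by
      apply Finset.exists_ne_zero_of_sum_ne_zero
      rw [al_sum, ν.sum_one]; exact one_ne_zero
    have hlt : ∑ i, Y i < ∑ i, al k ν.p i * T := by
      refine Finset.sum_lt_sum (fun i _ => ?_) ⟨i0, Finset.mem_univ _, ?_⟩
      · rcases (al_nonneg k ν.p ν.nonneg i).eq_or_lt with h | h
        · rw [hzero i h.symm, ← h, zero_mul]
        · exact (hcon i h).le
      · exact hcon i0 (lt_of_le_of_ne (al_nonneg k ν.p ν.nonneg i0) hi0.symm)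
    rw [← Finset.sum_mul, al_sum, ν.sum_one, one_mul, ← hTY] at hlt
    exact lt_irrefl _ hlt
  obtain ⟨i, hi, hiT⟩ := hex
  have hmix : ∀ π o, mixObs q (condD k ν i hi).p π o = Nc (Qx q π) k ν.p o i / al k ν.p i :=
    fun π o => condD_sum k ν i hi fun m => q m π o
  refine ⟨i, condD k ν i hi, ?_, ?_⟩
  · intro m hm
    by_contra h
    push Not at h
    apply hm
    simp [condD, h]
  · rw [DT_real q V η, EReal.coe_le_coe_iff]
    · have h2 : Y i ≤ al k ν.p i * ∑ π, p.p π * ((⨆ π' : Pol, ∑ m : Mod, (condD k ν i hi).p m * V m π')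
          - ∑ m : Mod, (condD k ν i hi).p m * V m π
          - η⁻¹ * ∑ o, relT (mixObs q (condD k ν i hi).p π o) (Zf q ν.p π o)) := by
        rw [Finset.mul_sum]
        refine Finset.sum_le_sum fun π _ => ?_
        rw [mul_left_comm]
        refine mul_le_mul_of_nonneg_left ?_ (p.nonneg π)
        have e3 : al k ν.p i * ∑ o, relT (mixObs q (condD k ν i hi).p π o) (Zf q ν.p π o)
            = ∑ o, relT (Nc (Qx q π) k ν.p o i) (al k ν.p i * Zf q ν.p π o) := by
          rw [Finset.mul_sum]
          refine Finset.sum_congr rfl fun o _ => ?_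
          rw [← relT_smul, hmix, mul_div_cancel₀ _ hi.ne']
        obtain ⟨x0, -, hx0⟩ := Finset.exists_ne_zero_of_sum_ne_zero hi.ne'
        have hk0 : k x0 = i := by
          by_contra h; rw [if_neg h] at hx0; exact hx0 rfl
        have e4 : ∑ x, (if k x = i then ν.p x * (V x.1 x.2 - V x.1 π) else 0)
            = al k ν.p i * (∑ m : Mod, (condD k ν i hi).p m * V m x0.2)
              - al k ν.p i * (∑ m : Mod, (condD k ν i hi).p m * V m π) := by
          rw [condD_sum, condD_sum, mul_div_cancel₀ _ hi.ne', mul_div_cancel₀ _ hi.ne',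
            ← Finset.sum_sub_distrib]
          refine Finset.sum_congr rfl fun x _ => ?_
          split_ifs with h
          · rw [k2 x x0 (h.trans hk0.symm)]; ring
          · ring
        have e5 : ∑ m : Mod, (condD k ν i hi).p m * V m x0.2
            ≤ ⨆ π' : Pol, ∑ m : Mod, (condD k ν i hi).p m * V m π' :=
          le_ciSup (f := fun π' => ∑ m : Mod, (condD k ν i hi).p m * V m π')
            (Set.finite_range _).bddAbove x0.2
        have e6 := mul_le_mul_of_nonneg_left e5 hi.le
        rw [e4, ← e3]
        linarith
      exact le_of_mul_le_mul_left (hiT.trans h2) hi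
    · intro π o h
      rw [hmix, Nc_zero_of_Zc (Qx q π) k ν.p (fun x o => (hq x.1 π).1 o) ν.nonneg o i h, zero_div]

end MainHelpers

section Lower

set_option linter.unusedSectionVars false

variable {Pol Obs Mod I0 : Type*}
variable [Fintype Pol] [Fintype Obs] [Fintype Mod] [Fintype I0] [DecidableEq I0] [DecidableEq Pol]
variable [Nonempty Pol]
variable (q : Mod → Pol → Obs → ℝ) (V : Mod → Pol → ℝ) (partM : Mod → I0) (η : ℝ)

/-- cell map -/
def kM (x : Mod × Pol) : I0 × Pol := (partM x.1, x.2)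

/-- admissible priors -/
def goodS (c : Pol → Obs → ℝ) : Set (Mod × Pol → ℝ) :=
  {ν | (∀ x, 0 ≤ ν x) ∧ ∑ x, ν x = 1 ∧ ∀ x π o, c π o = 0 → ν x * q x.1 π o = 0}

def prodD (μ : Mod → ℝ) (π' : Pol) : Mod × Pol → ℝ := fun x => if x.2 = π' then μ x.1 else 0

lemma prodD_sum (μ : Mod → ℝ) (π' : Pol) (F : Mod × Pol → ℝ) :
    ∑ x, prodD μ π' x * F x = ∑ m, μ m * F (m, π') := by
  rw [Fintype.sum_prod_type]
  simp [prodD]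

lemma prodD_good (μ : FDist Mod) (π' : Pol) (c : Pol → Obs → ℝ)
    (h : ∀ m π o, c π o = 0 → μ.p m * q m π o = 0) : prodD μ.p π' ∈ goodS q c := by
  refine ⟨fun x => ?_, ?_, fun x π o hc => ?_⟩
  · unfold prodD
    split_ifs
    · exact μ.nonneg _
    · exact le_rfl
  · have := prodD_sum μ.p π' fun _ => 1
    simp only [mul_one] at this
    rw [this, μ.sum_one]
  · unfold prodD
    split_ifs
    · exact h _ _ _ hc
    · rw [zero_mul]

lemma good_Nc (c : Pol → Obs → ℝ) (ν : Mod × Pol → ℝ) (hν : ν ∈ goodS q c) (π : Pol)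
    (o : Obs) (i : I0 × Pol) (hc : c π o = 0) : Nc (Qx q π) (kM partM) ν o i = 0 :=
  Finset.sum_eq_zero fun x _ => by
    split_ifs
    · exact hν.2.2 x π o hc
    · rfl

lemma goodS_convex (c : Pol → Obs → ℝ) : Convex ℝ (goodS q c) := by
  rintro x ⟨hx1, hx2, hx3⟩ y ⟨hy1, hy2, hy3⟩ a b ha hb hab
  refine ⟨fun z => ?_, ?_, fun z π o hc => ?_⟩
  · have := hx1 z
    have := hy1 z
    simp only [Pi.add_apply, Pi.smul_apply, smul_eq_mul]
    positivity
  · simp only [Pi.add_apply, Pi.smul_apply, smul_eq_mul]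
    rw [Finset.sum_add_distrib, ← Finset.mul_sum, ← Finset.mul_sum, hx2, hy2]
    linarith
  · simp only [Pi.add_apply, Pi.smul_apply, smul_eq_mul]
    have e1 := hx3 z π o hc
    have e2 := hy3 z π o hc
    rw [add_mul, mul_assoc, mul_assoc, e1, e2]; ring

lemma Hf_concave (hq : ∀ m π, (∀ o, 0 ≤ q m π o) ∧ ∑ o, q m π o = 1) (hη : 0 < η)
    (c : Pol → Obs → ℝ) (hc0 : ∀ π o, 0 ≤ c π o)
    (x : Mod × Pol → ℝ) (hx : x ∈ goodS q c) (y : Mod × Pol → ℝ) (hy : y ∈ goodS q c)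
    (a b : ℝ) (ha : 0 ≤ a) (hb : 0 ≤ b) (π : Pol) :
    a * Hf q V (kM partM) η c x π + b * Hf q V (kM partM) η c y π
      ≤ Hf q V (kM partM) η c (a • x + b • y) π := by
  have h1 := Dc_convex (Qx q π) (kM partM) x (fun z o => (hq z.1 π).1 o) y hx.1 hy.1 (c π) (hc0 π)
    (fun o i h => good_Nc q partM c x hx π o i h) (fun o i h => good_Nc q partM c y hy π o i h)
    a b ha hb
  have h2 := mul_le_mul_of_nonneg_left h1 (inv_pos.mpr hη).le
  have h3 : Rw V (a • x + b • y) π = a * Rw V x π + b * Rw V y π := by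
    unfold Rw
    rw [Finset.mul_sum, Finset.mul_sum, ← Finset.sum_add_distrib]
    refine Finset.sum_congr rfl fun z _ => ?_
    simp only [Pi.add_apply, Pi.smul_apply, smul_eq_mul]
    ring
  unfold Hf
  rw [h3]
  linarith

lemma Hf_le_one (hq : ∀ m π, (∀ o, 0 ≤ q m π o) ∧ ∑ o, q m π o = 1)
    (hV : ∀ m π, V m π ∈ Set.Icc (0 : ℝ) 1) (hη : 0 < η)
    (c : Pol → Obs → ℝ) (hc0 : ∀ π o, 0 ≤ c π o) (hc1 : ∀ π, ∑ o, c π o = 1)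
    (x : Mod × Pol → ℝ) (hx : x ∈ goodS q c) (π : Pol) :
    Hf q V (kM partM) η c x π ≤ 1 := by
  have h1 := Dc_nonneg (Qx q π) (kM partM) x (fun z o => (hq z.1 π).1 o) (fun z => (hq z.1 π).2)
    hx.1 (c π) (hc0 π) (hc1 π) (fun o i h => good_Nc q partM c x hx π o i h)
  have h2 := mul_nonneg (inv_pos.mpr hη).le h1
  have h3 : Rw V x π ≤ ∑ z, x z := Finset.sum_le_sum fun z _ => by
    have e1 := (hV z.1 z.2).2
    have e2 := (hV z.1 π).1
    have := mul_le_mul_of_nonneg_left (show V z.1 z.2 - V z.1 π ≤ 1 by linarith) (hx.1 z)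
    linarith
  rw [hx.2.1] at h3
  unfold Hf
  linarith

lemma Hf_mean (hq : ∀ m π, (∀ o, 0 ≤ q m π o) ∧ ∑ o, q m π o = 1) (hη : 0 < η)
    (c : Pol → Obs → ℝ) (hc0 : ∀ π o, 0 ≤ c π o) (hc1 : ∀ π, ∑ o, c π o = 1)
    (x : Mod × Pol → ℝ) (hx : x ∈ goodS q c) (π : Pol) :
    Hf q V (kM partM) η c x π ≤ Hf q V (kM partM) η (Zf q x) x π := by
  have h1 := Dc_mean_le (Qx q π) (kM partM) x (fun z o => (hq z.1 π).1 o) (fun z => (hq z.1 π).2)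
    hx.1 hx.2.1 (c π) (hc0 π) (hc1 π) (fun o i h => good_Nc q partM c x hx π o i h)
  have h2 := mul_le_mul_of_nonneg_left h1 (inv_pos.mpr hη).le
  unfold Hf Zf
  linarith

lemma Hf_prod (c : Pol → Obs → ℝ) (μ : FDist Mod) (θ : I0) (hθ : ∀ m, μ.p m ≠ 0 → partM m = θ)
    (π' π : Pol) :
    Hf q V (kM partM) η c (prodD μ.p π') π = (∑ m, μ.p m * V m π') - (∑ m, μ.p m * V m π)
      - η⁻¹ * ∑ o, relT (mixObs q μ.p π o) (c π o) := by
  have key : ∀ (F : Mod → ℝ) (i : I0 × Pol),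
      (∑ x, if kM partM x = i then prodD μ.p π' x * F x.1 else 0)
        = if i = (θ, π') then ∑ m, μ.p m * F m else 0 := by
    intro F i
    have e : ∀ x, (if kM partM x = i then prodD μ.p π' x * F x.1 else 0)
        = prodD μ.p π' x * (if i = (θ, π') then F x.1 else 0) := by
      intro x
      by_cases h0 : prodD μ.p π' x = 0
      · simp [h0]
      · have hx2 : x.2 = π' := by
          by_contra h; exact h0 (by simp [prodD, h])
        have hx1 : partM x.1 = θ := hθ _ (by
          intro h; exact h0 (by simp [prodD, h]))
        have hk : kM partM x = (θ, π') := by simp [kM, hx1, hx2]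
        rw [hk]
        by_cases hi : i = (θ, π')
        · simp [hi]
        · rw [if_neg hi, if_neg (fun h => hi h.symm), mul_zero]
    rw [Finset.sum_congr rfl fun x _ => e x, prodD_sum]
    split_ifs <;> simp
  have hN : ∀ o i, Nc (Qx q π) (kM partM) (prodD μ.p π') o i
      = if i = (θ, π') then mixObs q μ.p π o else 0 := fun o i => key (fun m => q m π o) i
  have ha : ∀ i, al (kM partM) (prodD μ.p π') i = if i = (θ, π') then 1 else 0 := by
    intro i
    have := key (fun _ => 1) i
    simp only [mul_one, μ.sum_one] at this
    exact this
  unfold Hf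
  congr 1
  · unfold Rw
    rw [prodD_sum μ.p π' (fun x => V x.1 x.2 - V x.1 π), ← Finset.sum_sub_distrib]
    exact Finset.sum_congr rfl fun m _ => by ring
  · congr 1
    unfold Dc
    rw [Finset.sum_eq_single (θ, π')]
    · simp [hN, ha]
    · intro i _ hi
      exact Finset.sum_eq_zero fun o _ => by rw [hN, if_neg hi, relT_zero]
    · simp

lemma lower (hq : ∀ m π, (∀ o, 0 ≤ q m π o) ∧ ∑ o, q m π o = 1)
    (hV : ∀ m π, V m π ∈ Set.Icc (0 : ℝ) 1) (hη : 0 < η) (μbar : FDist Mod)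
    (t0 t : ℝ) (ht : t0 < t)
    (H : ∀ ν : FDist (Mod × Pol), ∃ π, Hf q V (kM partM) η (Zf q ν.p) ν.p π ≤ t0) :
    ∃ p : FDist Pol, ∀ (θ : I0) (μ : FDist Mod), (∀ m, μ.p m ≠ 0 → partM m = θ) →
      DT q V η p.p μ.p (mixObs q μbar.p) ≤ (t : EReal) := by
  set c : Pol → Obs → ℝ := mixObs q μbar.p with hcdef
  have hmul : ∀ (μ : FDist Mod) m π o, 0 ≤ μ.p m * q m π o := fun μ m π o =>
    mul_nonneg (μ.nonneg m) ((hq m π).1 o)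
  have hmix0 : ∀ (μ : FDist Mod) π o, mixObs q μ.p π o = 0 → ∀ m, μ.p m * q m π o = 0 :=
    fun μ π o h m => (Finset.sum_eq_zero_iff_of_nonneg (fun m _ => hmul μ m π o)).mp h m
      (Finset.mem_univ _)
  have hc0 : ∀ π o, 0 ≤ c π o := fun π o => Finset.sum_nonneg fun m _ => hmul μbar m π o
  have hc1 : ∀ π, ∑ o, c π o = 1 := by
    intro π
    simp only [hcdef, mixObs]
    rw [Finset.sum_comm, ← μbar.sum_one]
    refine Finset.sum_congr rfl fun m _ => ?_
    rw [← Finset.mul_sum, (hq m π).2, mul_one]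
  have hne : (goodS q c).Nonempty := ⟨prodD μbar.p (Classical.arbitrary Pol),
    prodD_good q μbar _ c fun m π o h => hmix0 μbar π o h m⟩
  obtain ⟨p0, hp0⟩ := minimax_sep (goodS q c) hne (fun ν π => Hf q V (kM partM) η c ν π)
    (goodS_convex q c)
    (fun x hx y hy a b ha hb _ π => Hf_concave q V partM η hq hη c hc0 x hx y hy a b ha hb π)
    t0 (fun x hx => by
      obtain ⟨π, hπ⟩ := H ⟨x, hx.1, hx.2.1⟩
      exact ⟨π, (Hf_mean q V partM η hq hη c hc0 hc1 x hx π).trans hπ⟩)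
  -- smoothing
  let ε : ℝ := (t - t0) / (t - t0 + 1 + |t0|)
  have hden : 0 < t - t0 + 1 + |t0| := by
    have := abs_nonneg t0
    linarith
  have hε0 : 0 < ε := div_pos (by linarith) hden
  have hε1 : ε ≤ 1 := by
    rw [div_le_one hden]
    have := abs_nonneg t0
    linarith
  have hεe : ε * (t - t0 + 1 + |t0|) = t - t0 := div_mul_cancel₀ _ hden.ne'
  let n : ℝ := Fintype.card Pol
  have hn : 0 < n := by simp only [n]; exact_mod_cast Fintype.card_pos
  let p : FDist Pol := ⟨fun π => (1 - ε) * p0.p π + ε * n⁻¹, fun π => by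
      have := p0.nonneg π
      have : 0 ≤ 1 - ε := by linarith
      positivity, by
    rw [Finset.sum_add_distrib, ← Finset.mul_sum, p0.sum_one, Finset.sum_const, Finset.card_univ,
      nsmul_eq_mul]
    change (1 - ε) * 1 + n * (ε * n⁻¹) = 1
    field_simp; ring⟩
  have hppos : ∀ π, 0 < p.p π := fun π => by
    have h1 := p0.nonneg π
    have h2 : 0 ≤ 1 - ε := by linarith
    have h3 : 0 < ε * n⁻¹ := by positivity
    have := mul_nonneg h2 h1
    change 0 < (1 - ε) * p0.p π + ε * n⁻¹
    linarith
  have hpt : ∀ ν ∈ goodS q c, ∑ π, p.p π * Hf q V (kM partM) η c ν π ≤ t := by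
    intro ν hν
    have e : ∑ π, p.p π * Hf q V (kM partM) η c ν π
        = (1 - ε) * (∑ π, p0.p π * Hf q V (kM partM) η c ν π)
          + ε * ∑ π, n⁻¹ * Hf q V (kM partM) η c ν π := by
      rw [Finset.mul_sum, Finset.mul_sum, ← Finset.sum_add_distrib]
      exact Finset.sum_congr rfl fun π _ => by simp only [p]; ring
    have h1 := mul_le_mul_of_nonneg_left (hp0 ν hν) (show 0 ≤ 1 - ε by linarith)
    have h2 : ∑ π, n⁻¹ * Hf q V (kM partM) η c ν π ≤ ∑ π : Pol, n⁻¹ * 1 :=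
      Finset.sum_le_sum fun π _ => mul_le_mul_of_nonneg_left
        (Hf_le_one q V partM η hq hV hη c hc0 hc1 ν hν π) (inv_pos.mpr hn).le
    have h3 : ∑ π : Pol, n⁻¹ * 1 = 1 := by
      rw [Finset.sum_const, Finset.card_univ, nsmul_eq_mul, mul_one]
      exact mul_inv_cancel₀ hn.ne'
    rw [h3] at h2
    have h4 := mul_le_mul_of_nonneg_left h2 hε0.le
    have h5 : ε * (-t0) ≤ ε * |t0| := mul_le_mul_of_nonneg_left (neg_le_abs t0) hε0.le
    have h6 : 0 ≤ ε * (t - t0) := mul_nonneg hε0.le (by linarith)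
    rw [e]
    nlinarith
  refine ⟨p, fun θ μ hθ => ?_⟩
  by_cases hgood : ∀ π o, c π o = 0 → mixObs q μ.p π o = 0
  · obtain ⟨π', hπ'⟩ := exists_eq_ciSup_of_finite (f := fun π' => ∑ m : Mod, μ.p m * V m π')
    have hmem : prodD μ.p π' ∈ goodS q c :=
      prodD_good q μ π' c fun m π o h => hmix0 μ π o (hgood π o h) m
    rw [DT_real q V η _ _ _ hgood, EReal.coe_le_coe_iff]
    refine le_trans (le_of_eq ?_) (hpt _ hmem)
    refine Finset.sum_congr rfl fun π _ => ?_
    rw [Hf_prod q V partM η c μ θ hθ π' π, ← hπ']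
  · push Not at hgood
    obtain ⟨π, o, h1, h2⟩ := hgood
    have : DT q V η p.p μ.p c = ⊥ := by
      unfold DT
      rw [ereal_sum_eq_top _ _ _ π (Finset.mem_univ _)]
      · exact sub_mul_top _ _ hη
      · rw [KL_top _ _ o h1 h2]
        exact EReal.coe_mul_top_of_pos (hppos π)
      · exact fun π _ => coe_mul_ne_bot _ (p.nonneg π) _ (KL_ne_bot _ _)
    rw [this]
    exact bot_le

end Lower

/-- **Lemma (fixed-comparator games: `AIR^Φ` max-min equals `DEC^KL_η(𝓜̄(Φ))`).**
Suppose the choice of model is independent of the comparator: there is a partition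
`Θ` of `𝓜` (given by `partM : Mod → I0`) such that
`Φ = { {(M, π) : partM M = θ} : θ ∈ Θ, π ∈ Π }` (indexed by `I0 × Π`).
Then for every `η > 0`,
`max_{ρ∈Δ(Φ)} max_{ν∈Δ(Ψ)} min_{p∈Δ(Π)} AIR^Φ_{ρ,η}(p,ν) = DEC^KL_η(𝓜̄(Φ))`. -/
theorem airmaxmin_eq_DECbar_of_fixed_comparator
    {Pol Obs Mod I0 : Type*}
    [Fintype Pol] [Fintype Obs] [Fintype Mod] [Fintype I0]
    [DecidableEq I0] [DecidableEq Pol]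
    [Nonempty Pol] [Nonempty Obs] [Nonempty Mod]
    (q : Mod → Pol → Obs → ℝ)
    (hq : ∀ m π, (∀ o, 0 ≤ q m π o) ∧ ∑ o, q m π o = 1)
    (V : Mod → Pol → ℝ)
    (hV : ∀ m π, V m π ∈ Set.Icc (0 : ℝ) 1)
    (partM : Mod → I0)
    (η : ℝ) (hη : 0 < η) :
    AIRmaxmin q V (fun mp => some (partM mp.1, mp.2)) η
      = DECbar q V (fun mp => some (partM mp.1, mp.2)) η := by
  apply le_antisymm
  · refine iSup_le fun ρ => iSup_le fun ν => ?_
    refine le_iSup_of_le ⟨margD ν.1, fun m _ => ⟨_, Classical.arbitrary Pol, rfl⟩⟩ ?_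
    refine iInf_mono fun p => ?_
    refine (AIR_le q V (kM partM) η hq hη ρ p ν.1).trans ?_
    obtain ⟨i, μ, hμ, hle⟩ := upper q V (kM partM) η
      (fun x y h => (Prod.ext_iff.mp h).2) hq hη p ν.1
    refine hle.trans ?_
    refine le_iSup_of_le i (le_iSup_of_le ⟨μ, fun m hm => ?_⟩ ?_)
    · obtain ⟨π, hπ⟩ := hμ m hm
      exact ⟨π, congrArg some hπ⟩
    · rw [← mixObs_marg]
      exact le_rfl
  · refine iSup_le fun μbar => ?_
    refine EReal.le_of_forall_lt_iff_le.mp fun t hT => ?_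
    obtain ⟨t0, hT0, ht0⟩ := EReal.exists_between_coe_real hT
    obtain ⟨p, hp⟩ := lower q V partM η hq hV hη μbar.1 t0 t (EReal.coe_lt_coe_iff.mp ht0) (by
      intro ν
      by_contra hcon
      push Not at hcon
      refine absurd hT0 (not_lt.mpr ?_)
      refine le_iSup_of_le (alD (kM partM) ν) (le_iSup_of_le ⟨ν, fun _ h => by simp at h⟩ ?_)
      refine le_iInf fun p => ?_
      refine le_trans ?_ (AIR_eq q V (kM partM) η hq p ν).ge
      rw [EReal.coe_le_coe_iff]
      calc t0 = ∑ π, p.p π * t0 := by rw [← Finset.sum_mul, p.sum_one, one_mul]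
        _ ≤ _ := Finset.sum_le_sum fun π _ => mul_le_mul_of_nonneg_left (hcon π).le (p.nonneg π))
    refine iInf_le_of_le p ?_
    refine iSup_le fun i => iSup_le fun μ => ?_
    refine hp i.1 μ.1 fun m hm => ?_
    obtain ⟨π, hπ⟩ := μ.2 m hm
    exact congrArg Prod.fst (Option.some.inj hπ)
end
end
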